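/- arXiv:2407.12733 — 2 statements merged into one kernel-verified Lean document; each statement's English description precedes it below -/
import Mathlib

section
/- Let u(·,t) be convex in x for each t and solve u_t = Σ arctan λ_i(D²u) − Θ₀ on B̄_{2R+1}(0) × [0,1/n] for some constant Θ₀ ≥ 0 arising as the Lagrangian angle lower bound; suppose the oscillation of u(·,0) on B̄_{2R+1}(0) is M. Then max_{B̄_1(0)×[0,1/n]} |Du| ≤ (1/R)[M + arctan(π/R²)]. -/
/-- The Hessian matrix of a function on Euclidean space, in coordinates. -/
noncomputable def hess {n : ℕ} (u : EuclideanSpace ℝ (Fin n) → ℝ)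
    (x : EuclideanSpace ℝ (Fin n)) : Matrix (Fin n) (Fin n) ℝ :=
  fun i j => iteratedFDeriv ℝ 2 u x ![EuclideanSpace.single i 1, EuclideanSpace.single j 1]

section Helpers
open Topology Filter

lemma second_test (g g' : ℝ → ℝ) (q : ℝ) (h1 : ∀ᶠ s in 𝓝 (0:ℝ), HasDerivAt g (g' s) s)
    (h2 : HasDerivAt g' q 0) (hm : IsLocalMin g 0) : 0 ≤ q := by
  by_contra hq
  push Not at hq
  have e : deriv g =ᶠ[𝓝 0] g' := h1.mono fun s hs => hs.deriv
  have hd2 : deriv (deriv g) 0 = q := by rw [e.deriv_eq, h2.deriv]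
  have hmax : IsLocalMax g 0 := by
    apply isLocalMax_of_deriv_deriv_neg
    · rw [hd2]; exact hq
    · exact hm.deriv_eq_zero
    · exact h1.self_of_nhds.continuousAt
  have hc : g =ᶠ[𝓝 0] fun _ => g 0 := by
    filter_upwards [hm, hmax] with s a b using le_antisymm b a
  have : deriv g =ᶠ[𝓝 0] fun _ => 0 := by
    have := hc.deriv
    simpa using this
  have h3 := this.deriv_eq
  rw [hd2] at h3
  simp at h3
  linarith

lemma second_line {E : Type*} [NormedAddCommGroup E] [NormedSpace ℝ E] (f : E → ℝ) (x v : E)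
    (hf : ContDiffAt ℝ 2 f x) :
    (∀ᶠ s in 𝓝 (0:ℝ), HasDerivAt (fun s : ℝ => f (x + s • v)) (fderiv ℝ f (x + s • v) v) s) ∧
    HasDerivAt (fun s : ℝ => fderiv ℝ f (x + s • v) v) (fderiv ℝ (fderiv ℝ f) x v v) 0 := by
  have hl : ∀ s : ℝ, HasDerivAt (fun s : ℝ => x + s • v) v s := fun s => by
    simpa using ((hasDerivAt_id s).smul_const v).const_add x
  have hc : Tendsto (fun s : ℝ => x + s • v) (𝓝 0) (𝓝 x) := by
    have := (hl 0).continuousAt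
    simpa [ContinuousAt] using this
  constructor
  · have := hc.eventually (hf.eventually (by simp))
    filter_upwards [this] with s hs
    exact (hs.differentiableAt (by simp)).hasFDerivAt.comp_hasDerivAt s (hl s)
  · have h1 : ContDiffAt ℝ 1 (fderiv ℝ f) x := hf.fderiv_right (by norm_num)
    have h2 : HasFDerivAt (fderiv ℝ f) (fderiv ℝ (fderiv ℝ f) x) (x + (0:ℝ) • v) := by
      simpa using (h1.differentiableAt (by simp)).hasFDerivAt
    have h3 := h2.comp_hasDerivAt (0:ℝ) (hl 0)
    exact h3.clm_apply (hasDerivAt_const (0:ℝ) v) |>.congr_deriv (by simp)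

lemma convex_grad {E : Type*} [NormedAddCommGroup E] [NormedSpace ℝ E] (f : E → ℝ) (S : Set E)
    (hc : ConvexOn ℝ S f) (x y : E) (hx : x ∈ S) (hy : y ∈ S) (hf : DifferentiableAt ℝ f x) :
    fderiv ℝ f x (y - x) ≤ f y - f x := by
  have h1 := hc.comp_affineMap (AffineMap.lineMap (k := ℝ) x y)
  have hd : HasDerivAt (f ∘ (AffineMap.lineMap (k := ℝ) x y)) (fderiv ℝ f x (y - x)) 0 := by
    have : HasFDerivAt f (fderiv ℝ f x) (AffineMap.lineMap (k := ℝ) x y 0) := by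
      simpa using hf.hasFDerivAt
    exact this.comp_hasDerivAt (0:ℝ) AffineMap.hasDerivAt_lineMap
  have := h1.le_slope_of_hasDerivAt (x := 0) (y := 1) (by simpa using hx) (by simpa using hy) one_pos hd
  simpa [slope_def_field] using this

lemma eig_eq {n : ℕ} (f : EuclideanSpace ℝ (Fin n) → ℝ)
    (x : EuclideanSpace ℝ (Fin n)) (h : (hess f x).IsHermitian) (i : Fin n) :
    ∃ v : EuclideanSpace ℝ (Fin n), ‖v‖ = 1 ∧
      h.eigenvalues i = fderiv ℝ (fderiv ℝ f) x v v := by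
  refine ⟨h.eigenvectorBasis i, by simp, ?_⟩
  rw [h.eigenvalues_eq]
  generalize h.eigenvectorBasis i = v
  have hv : v = ∑ j, v j • EuclideanSpace.single j (1:ℝ) := by
    ext k
    simp [Finset.sum_apply, Pi.single_apply]
  conv_rhs => rw [hv]
  simp only [map_sum, map_smul, FunLike.coe_sum, Finset.sum_apply, FunLike.coe_smul, Pi.smul_apply, smul_eq_mul]
  simp [dotProduct, Matrix.mulVec, hess, iteratedFDeriv_two_apply, Finset.mul_sum]
  refine (Finset.sum_comm.trans (Finset.sum_congr rfl fun a _ => Finset.sum_congr rfl fun b _ => ?_))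
  try ring

/-- second derivative bounds -/
lemma eig_nonneg {n : ℕ} (f : EuclideanSpace ℝ (Fin n) → ℝ) (S : Set (EuclideanSpace ℝ (Fin n)))
    (x : EuclideanSpace ℝ (Fin n)) (hS : S ∈ 𝓝 x) (hc : ConvexOn ℝ S f) (hf : ContDiffAt ℝ 2 f x)
    (h : (hess f x).IsHermitian) (i : Fin n) : 0 ≤ h.eigenvalues i := by
  obtain ⟨v, -, hv⟩ := eig_eq f x h i
  rw [hv]
  obtain ⟨h1, h2⟩ := second_line f x v hf
  refine second_test (fun s => f (x + s • v) - s * fderiv ℝ f x v)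
    (fun s => fderiv ℝ f (x + s • v) v - fderiv ℝ f x v) _ ?_ (h2.sub_const _) ?_
  · filter_upwards [h1] with s hs
    exact hs.sub (by simpa using (hasDerivAt_id s).mul_const (fderiv ℝ f x v))
  · have hcont : Tendsto (fun s : ℝ => x + s • v) (𝓝 0) (𝓝 x) := by
      have : Continuous (fun s : ℝ => x + s • v) := by fun_prop
      simpa using this.tendsto 0
    filter_upwards [hcont.eventually hS] with s hs
    have := convex_grad f S hc x (x + s • v) (mem_of_mem_nhds hS) hs
      (hf.differentiableAt (by simp))
    simp at this ⊢
    linarith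

lemma eig_le {n : ℕ} (f : EuclideanSpace ℝ (Fin n) → ℝ) (c : ℝ)
    (x x0 : EuclideanSpace ℝ (Fin n)) (hf : ContDiffAt ℝ 2 f x)
    (hmax : IsLocalMax (fun y => f y - c * ‖y - x0‖ ^ 2) x)
    (h : (hess f x).IsHermitian) (i : Fin n) : h.eigenvalues i ≤ 2 * c := by
  obtain ⟨v, hv1, hv⟩ := eig_eq f x h i
  rw [hv]
  obtain ⟨h1, h2⟩ := second_line f x v hf
  set a := inner ℝ (x - x0) v
  have hexp : ∀ s : ℝ, ‖x + s • v - x0‖ ^ 2 = ‖x - x0‖ ^ 2 + 2 * s * a + s ^ 2 := by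
    intro s
    have : x + s • v - x0 = (x - x0) + s • v := by abel
    rw [this, norm_add_sq_real, norm_smul, hv1, inner_smul_right]
    simp
    ring
  have key : 0 ≤ 2 * c - fderiv ℝ (fderiv ℝ f) x v v := by
    refine second_test (fun s => (c * (2 * s * a + s ^ 2)) - f (x + s • v))
      (fun s => c * (2 * a + 2 * s) - fderiv ℝ f (x + s • v) v) _ ?_ (HasDerivAt.sub ?_ h2) ?_
    · filter_upwards [h1] with s hs
      refine HasDerivAt.sub ?_ hs
      have := ((((hasDerivAt_id s).const_mul 2).mul_const a).add ((hasDerivAt_id s).pow 2)).const_mul c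
      exact this.congr_deriv (by simp)
    · have := (((hasDerivAt_id (0:ℝ)).const_mul 2).const_add (2 * a)).const_mul c
      exact this.congr_deriv (by simp; ring)
    · have hcont : Tendsto (fun s : ℝ => x + s • v) (𝓝 0) (𝓝 x) := by
        have : Continuous (fun s : ℝ => x + s • v) := by fun_prop
        simpa using this.tendsto 0
      filter_upwards [hcont.eventually hmax] with s hs
      rw [hexp] at hs
      simp
      linarith
  linarith

end Helpers

theorem stmt7 (n : ℕ) (hn : 1 ≤ n) (R : ℝ) (hR : 0 < R) (Θ₀ : ℝ) (hΘ₀ : 0 ≤ Θ₀)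
    (u : EuclideanSpace ℝ (Fin n) → ℝ → ℝ)
    (hsmooth : ContDiffOn ℝ (⊤ : ℕ∞) (fun p : EuclideanSpace ℝ (Fin n) × ℝ => u p.1 p.2)
      (Metric.closedBall 0 (2 * R + 1) ×ˢ Set.Icc (0 : ℝ) (1 / n)))
    (hconv : ∀ t ∈ Set.Icc (0 : ℝ) (1 / n),
      ConvexOn ℝ (Metric.closedBall (0 : EuclideanSpace ℝ (Fin n)) (2 * R + 1))
        (fun y => u y t))
    (hsym : ∀ x ∈ Metric.closedBall (0 : EuclideanSpace ℝ (Fin n)) (2 * R + 1),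
      ∀ t ∈ Set.Icc (0 : ℝ) (1 / n), (hess (fun y => u y t) x).IsHermitian)
    (hPDE : ∀ x (hx : x ∈ Metric.closedBall (0 : EuclideanSpace ℝ (Fin n)) (2 * R + 1))
      t (ht : t ∈ Set.Icc (0 : ℝ) (1 / n)),
        deriv (u x) t = (∑ i, Real.arctan ((hsym x hx t ht).eigenvalues i)) - Θ₀)
    (M : ℝ)
    (hosc : ∀ x ∈ Metric.closedBall (0 : EuclideanSpace ℝ (Fin n)) (2 * R + 1),
      ∀ y ∈ Metric.closedBall (0 : EuclideanSpace ℝ (Fin n)) (2 * R + 1),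
        u x 0 - u y 0 ≤ M) :
    ∀ x ∈ Metric.closedBall (0 : EuclideanSpace ℝ (Fin n)) 1,
      ∀ t ∈ Set.Icc (0 : ℝ) (1 / n),
        ‖gradient (fun y => u y t) x‖ ≤ (1 / R) * (M + Real.arctan (Real.pi / R ^ 2)) := by
  have hn0 : (0:ℝ) < n := by exact_mod_cast hn
  have hT0 : (0:ℝ) < 1 / n := by positivity
  set B := Metric.closedBall (0 : EuclideanSpace ℝ (Fin n)) (2 * R + 1) with hB
  set c : ℝ := Real.pi / (2 * R ^ 2) with hcdef
  have h2c : 2 * c = Real.pi / R ^ 2 := by rw [hcdef]; field_simp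
  have hcR : c * R ^ 2 = Real.pi / 2 := by rw [hcdef]; field_simp
  have hc0 : 0 < c := by have := Real.pi_pos; positivity
  set A : ℝ := Real.arctan (Real.pi / R ^ 2) with hA
  have hA0 : 0 ≤ A := Real.arctan_nonneg.2 (by have := Real.pi_pos; positivity)
  have hcontu := hsmooth.continuousOn
  -- time slices
  have htc : ∀ x ∈ B, ContinuousOn (u x) (Set.Icc (0:ℝ) (1 / n)) := by
    intro x hx
    exact hcontu.comp (f := fun t : ℝ => (x, t)) (by fun_prop) (fun t ht => ⟨hx, ht⟩)
  have htd : ∀ x ∈ B, ∀ t ∈ Set.Ioo (0:ℝ) (1 / n), DifferentiableAt ℝ (u x) t := by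
    intro x hx t ht
    have : ContDiffOn ℝ (⊤ : ℕ∞) (u x) (Set.Icc (0:ℝ) (1 / n)) :=
      hsmooth.comp (f := fun t : ℝ => (x, t)) (by fun_prop) (fun t ht => ⟨hx, ht⟩)
    exact (this.contDiffAt (Icc_mem_nhds ht.1 ht.2)).differentiableAt (by simp)
  -- space slices
  have hBn : ∀ x : EuclideanSpace ℝ (Fin n), ‖x‖ < 2 * R + 1 → B ∈ nhds x := by
    intro x hx
    exact Filter.mem_of_superset (Metric.isOpen_ball.mem_nhds (by simpa using hx))
      Metric.ball_subset_closedBall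
  have hxs : ∀ x : EuclideanSpace ℝ (Fin n), ‖x‖ < 2 * R + 1 → ∀ t ∈ Set.Icc (0:ℝ) (1 / n),
      ContDiffAt ℝ 2 (fun y => u y t) x := by
    intro x hx t ht
    have : ContDiffOn ℝ (⊤ : ℕ∞) (fun y => u y t) B :=
      hsmooth.comp (f := fun y => (y, t)) (by fun_prop) (fun y hy => ⟨hy, ht⟩)
    exact (this.contDiffAt (hBn x hx)).of_le (WithTop.coe_le_coe.2 (le_top : (2 : ℕ∞) ≤ ⊤))
  -- upper bound in time
  have hup : ∀ x ∈ B, ∀ t ∈ Set.Icc (0:ℝ) (1 / n), u x t + Θ₀ * t ≤ u x 0 + Real.pi / 2 := by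
    intro x hx t ht
    have hle := Convex.image_sub_le_mul_sub_of_deriv_le (convex_Icc (0:ℝ) (1 / n))
      (htc x hx) (C := n * (Real.pi / 2) - Θ₀)
      (by rw [interior_Icc]; exact fun s hs => (htd x hx s hs).differentiableWithinAt)
      (by
        rw [interior_Icc]
        intro s hs
        rw [hPDE x hx s (Set.Ioo_subset_Icc_self hs)]
        have : ∑ i, Real.arctan ((hsym x hx s (Set.Ioo_subset_Icc_self hs)).eigenvalues i)
            ≤ ∑ i : Fin n, Real.pi / 2 :=
          Finset.sum_le_sum fun i _ => (Real.arctan_lt_pi_div_two _).le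
        simp at this
        linarith)
      0 ⟨le_rfl, hT0.le⟩ t ht ht.1
    have h1 : (n:ℝ) * t ≤ 1 := by
      have := ht.2
      rw [le_div_iff₀ hn0] at this
      linarith
    have h2 := mul_le_mul_of_nonneg_right h1 (by have := Real.pi_pos; positivity : 0 ≤ Real.pi / 2)
    nlinarith
  -- monotone in time
  have hlow : ∀ x : EuclideanSpace ℝ (Fin n), ‖x‖ < 2 * R + 1 → ∀ t ∈ Set.Icc (0:ℝ) (1 / n),
      u x 0 ≤ u x t + Θ₀ * t := by
    intro x hx t ht
    have hxB : x ∈ B := mem_of_mem_nhds (hBn x hx)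
    have hle := Convex.mul_sub_le_image_sub_of_le_deriv (convex_Icc (0:ℝ) (1 / n))
      (htc x hxB) (C := - Θ₀)
      (by rw [interior_Icc]; exact fun s hs => (htd x hxB s hs).differentiableWithinAt)
      (by
        rw [interior_Icc]
        intro s hs
        rw [hPDE x hxB s (Set.Ioo_subset_Icc_self hs)]
        have : 0 ≤ ∑ i, Real.arctan ((hsym x hxB s (Set.Ioo_subset_Icc_self hs)).eigenvalues i) :=
          Finset.sum_nonneg fun i _ => Real.arctan_nonneg.2
            (eig_nonneg _ B x (hBn x hx) (hconv s (Set.Ioo_subset_Icc_self hs))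
              (hxs x hx s (Set.Ioo_subset_Icc_self hs)) _ i)
        linarith)
      0 ⟨le_rfl, hT0.le⟩ t ht ht.1
    linarith
  -- barrier, strict version
  have hbar : ∀ x0 : EuclideanSpace ℝ (Fin n), ‖x0‖ ≤ R + 1 → ∀ z ∈ B,
      ∀ T ∈ Set.Ioo (0:ℝ) (1 / n), ∀ ε > 0,
      u x0 T + (Θ₀ - n * A - ε) * T ≤ u z 0 + M := by
    intro x0 hx0 z hz T hT ε hε
    have hx0B : x0 ∈ B := by simp [hB]; linarith
    have hsub : B ×ˢ Set.Icc (0:ℝ) T ⊆ B ×ˢ Set.Icc (0:ℝ) (1 / n) :=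
      Set.prod_mono le_rfl (Set.Icc_subset_Icc_right hT.2.le)
    obtain ⟨⟨y, t⟩, ⟨hy, ht⟩, hmax⟩ :=
      ((isCompact_closedBall (0 : EuclideanSpace ℝ (Fin n)) (2 * R + 1)).prod
        (isCompact_Icc (a := (0:ℝ)) (b := T))).exists_isMaxOn ⟨(x0, T), hx0B, hT.1.le, le_rfl⟩
        (f := fun p : EuclideanSpace ℝ (Fin n) × ℝ =>
          u p.1 p.2 + (Θ₀ - n * A - ε) * p.2 - c * ‖p.1 - x0‖ ^ 2)
        (((hcontu.mono hsub).add (by fun_prop)).sub (by fun_prop))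
    have hmax' : ∀ y' ∈ B, ∀ t' ∈ Set.Icc (0:ℝ) T,
        u y' t' + (Θ₀ - n * A - ε) * t' - c * ‖y' - x0‖ ^ 2
          ≤ u y t + (Θ₀ - n * A - ε) * t - c * ‖y - x0‖ ^ 2 :=
      fun y' hy' t' ht' => hmax (show (y', t') ∈ _ from ⟨hy', ht'⟩)
    have h0 := hmax' x0 hx0B T ⟨hT.1.le, le_rfl⟩
    simp only [sub_self, norm_zero] at h0
    simp only at hy ht
    have htI : t ∈ Set.Icc (0:ℝ) (1 / n) := ⟨ht.1, ht.2.trans hT.2.le⟩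
    have hos := hosc y hy z hz
    rcases ht.1.eq_or_lt with ht0 | ht0
    · subst ht0
      have : 0 ≤ c * ‖y - x0‖ ^ 2 := by positivity
      linarith
    have hyn : ‖y‖ ≤ 2 * R + 1 := by simpa [hB] using hy
    rcases hyn.eq_or_lt with hyb | hyi
    · have h1 : R ≤ ‖y - x0‖ := by
        have := norm_sub_norm_le y x0
        linarith
      have h2 : c * R ^ 2 ≤ c * ‖y - x0‖ ^ 2 := by gcongr
      have h3 := hup y hy t htI
      have h4 : 0 ≤ (n * A + ε) * t := by positivity
      nlinarith
    · exfalso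
      have htO : t ∈ Set.Ioo (0:ℝ) (1 / n) := ⟨ht0, ht.2.trans_lt hT.2⟩
      have hd : HasDerivAt (fun s => u y s + (Θ₀ - n * A - ε) * s)
          (deriv (u y) t + (Θ₀ - n * A - ε)) t := by
        have h5 := (htd y hy t htO).hasDerivAt.add
          ((hasDerivAt_id t).const_mul (Θ₀ - n * A - ε))
        exact h5.congr_deriv (by simp)
      have hneg : deriv (u y) t + (Θ₀ - n * A - ε) < 0 := by
        rw [hPDE y hy t htI]
        have : ∑ i, Real.arctan ((hsym y hy t htI).eigenvalues i) ≤ ∑ i : Fin n, A := by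
          refine Finset.sum_le_sum fun i _ => Real.arctan_mono ?_
          rw [← h2c]
          refine eig_le _ c y x0 (hxs y hyi t htI) ?_ _ i
          filter_upwards [hBn y hyi] with y' hy'
          have := hmax' y' hy' t ht
          linarith
        simp at this
        linarith
      have hev : ∀ᶠ s in nhdsWithin t (Set.Iio t), slope (fun s => u y s + (Θ₀ - n * A - ε) * s) t s < 0 :=
        ((hasDerivAt_iff_tendsto_slope.1 hd).mono_left
          (nhdsWithin_mono _ (fun s hs => ne_of_lt hs))).eventually_lt_const hneg
      have hev2 : ∀ᶠ s in nhdsWithin t (Set.Iio t), s ∈ Set.Ioo 0 t := Ioo_mem_nhdsLT ht0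
      obtain ⟨s, hs1, hs2⟩ := (hev.and hev2).exists
      have h6 := hmax' y hy s ⟨hs2.1.le, hs2.2.le.trans ht.2⟩
      rw [slope_def_field, div_neg_iff] at hs1
      rcases hs1 with h | h
      · linarith [h.1, h.2]
      · linarith [h.1, h.2, hs2.2]
  -- barrier, final version
  have hbar2 : ∀ x0 : EuclideanSpace ℝ (Fin n), ‖x0‖ ≤ R + 1 → ∀ z ∈ B,
      ∀ T ∈ Set.Icc (0:ℝ) (1 / n), u x0 T + Θ₀ * T ≤ u z 0 + M + A := by
    intro x0 hx0 z hz T hT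
    have hx0B : x0 ∈ B := by simp [hB]; linarith
    have h1 : ∀ t ∈ Set.Ioo (0:ℝ) (1 / n), u x0 t + Θ₀ * t ≤ u z 0 + M + A := by
      intro t ht
      refine le_of_forall_pos_le_add fun ε hε => ?_
      have h2 := hbar x0 hx0 z hz t ht (ε * n) (by positivity)
      have h3 : (n:ℝ) * t ≤ 1 := by
        have := ht.2.le
        rw [le_div_iff₀ hn0] at this
        linarith
      have h4 := mul_le_mul_of_nonneg_right h3 (add_nonneg hA0 hε.le)
      nlinarith
    have hcl : T ∈ closure (Set.Ioo (0:ℝ) (1 / n)) := by rwa [closure_Ioo hT0.ne]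
    refine ContinuousWithinAt.closure_le hcl (f := fun t => u x0 t + Θ₀ * t)
      (g := fun _ => u z 0 + M + A) ?_ continuousWithinAt_const h1
    exact ((htc x0 hx0B T hT).mono Set.Ioo_subset_Icc_self).add (by fun_prop)
  -- gradient bound
  intro x hx t ht
  have hx1 : ‖x‖ ≤ 1 := by simpa using hx
  have hxi : ‖x‖ < 2 * R + 1 := by linarith
  have hxB : x ∈ B := mem_of_mem_nhds (hBn x hxi)
  have hM0 : 0 ≤ M := by simpa using hosc x hxB x hxB
  have hgd : ∀ v : EuclideanSpace ℝ (Fin n),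
      inner ℝ (gradient (fun y => u y t) x) v = fderiv ℝ (fun y => u y t) x v := by
    intro v
    rw [← toDual_gradient]
    simp
  set G := gradient (fun y => u y t) x with hG
  by_cases hG0 : G = 0
  · rw [hG0, norm_zero]
    positivity
  have hGn : 0 < ‖G‖ := norm_pos_iff.2 hG0
  have hnv : ‖(R / ‖G‖) • G‖ = R := by
    rw [norm_smul, Real.norm_of_nonneg (by positivity)]
    field_simp
  have hyn : ‖x + (R / ‖G‖) • G‖ ≤ R + 1 := by
    have := norm_add_le x ((R / ‖G‖) • G)
    rw [hnv] at this
    linarith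
  have h1 := convex_grad (fun y => u y t) B (hconv t ht) x (x + (R / ‖G‖) • G) hxB
    (by simp only [hB, mem_closedBall_zero_iff]; linarith)
    ((hxs x hxi t ht).differentiableAt (by simp))
  rw [add_sub_cancel_left, ← hgd, inner_smul_right, real_inner_self_eq_norm_sq] at h1
  have h2 : R / ‖G‖ * ‖G‖ ^ 2 = R * ‖G‖ := by field_simp
  rw [h2] at h1
  have h3 := hbar2 _ hyn x hxB t ht
  have h4 := hlow x hxi t ht
  rw [one_div, ← div_eq_inv_mul, le_div_iff₀ hR]
  linarith
end

section
/- Suppose u : ℝⁿ × (−∞, 0] → ℝ is a convex (in x) ancient solution of u_t = Σ arctan λ_i(D²u) − Θ₀ such that D²u(x,t) ≤ C(n)·I for all (x,t). Combined with the Liouville property for uniformly-Hessian-bounded convex ancient solutions, if additionally limsup_{t→−∞} sup_x |u(x,t)|/(|x|²+R₀) < 1/(6√n+2)² for some R₀, then there exist a symmetric matrix A, vector b, constants c, d such that u(x,t) = ½xᵀAx + b·x + c + d·t. -/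
noncomputable section LMCF

open Filter Topology Set
open scoped ContDiff
variable {n : ℕ}

/-- Points of space-time. -/
abbrev XT (n : ℕ) := EuclideanSpace ℝ (Fin n) × ℝ

/-- Negative times. -/
def Om (n : ℕ) : Set (XT n) := {p | p.2 < 0}

/-- Directional derivative in space-time. -/
def DD (w : XT n) (f : XT n → ℝ) : XT n → ℝ := fun p => fderiv ℝ f p w

/-- Spatial directional derivative. -/
abbrev Dx (v : EuclideanSpace ℝ (Fin n)) (f : XT n → ℝ) : XT n → ℝ := DD (v, 0) f

/-- Time derivative. -/
abbrev Dt (f : XT n → ℝ) : XT n → ℝ := DD (0, 1) f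

/-- Smooth for negative times. -/
def Sm (f : XT n → ℝ) : Prop := ContDiffOn ℝ ∞ f (Om n)

lemma isOpen_Om : IsOpen (Om n) := isOpen_lt continuous_snd continuous_const

lemma Sm.cda {f : XT n → ℝ} (hf : Sm f) {p : XT n} (hp : p ∈ Om n) : ContDiffAt ℝ ∞ f p :=
  hf.contDiffAt (isOpen_Om.mem_nhds hp)

lemma Sm.da {f : XT n → ℝ} (hf : Sm f) {p : XT n} (hp : p ∈ Om n) : DifferentiableAt ℝ f p :=
  (hf.cda hp).differentiableAt (by simp)

lemma Sm.DD {f : XT n → ℝ} (hf : Sm f) (w : XT n) : Sm (DD w f) := by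
  have h1 : ContDiffOn ℝ ∞ (fderiv ℝ f) (Om n) :=
    ContDiffOn.fderiv_of_isOpen hf isOpen_Om (by simp)
  exact h1.clm_apply contDiffOn_const

lemma two_le_infty' : ((1 : WithTop ℕ∞) + 1) ≤ ∞ := by
  rw [one_add_one_eq_two]
  exact WithTop.coe_le_coe.2 (le_top : (2 : ℕ∞) ≤ ⊤)

lemma DD_comm {f : XT n → ℝ} (hf : Sm f) {p : XT n} (hp : p ∈ Om n) (w w' : XT n) :
    DD w (DD w' f) p = DD w' (DD w f) p := by
  have hsym : IsSymmSndFDerivAt ℝ f p := (hf.cda hp).isSymmSndFDerivAt (by simpa [one_add_one_eq_two] using two_le_infty')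
  have h1 : ContDiffAt ℝ 1 (fderiv ℝ f) p := (hf.cda hp).fderiv_right two_le_infty'
  have h2 : DifferentiableAt ℝ (fderiv ℝ f) p := h1.differentiableAt (by simp)
  have key : ∀ a b : XT n, DD a (DD b f) p = fderiv ℝ (fderiv ℝ f) p a b := by
    intro a b
    have := (h2.hasFDerivAt.clm_apply (hasFDerivAt_const b p)).fderiv
    unfold DD
    rw [this]; simp
  rw [key, key]; exact hsym w w'

lemma DD_congr {f g : XT n → ℝ} (h : EqOn f g (Om n)) (w : XT n) :
    EqOn (DD w f) (DD w g) (Om n) := by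
  intro p hp
  have : f =ᶠ[𝓝 p] g := by
    filter_upwards [isOpen_Om.mem_nhds hp] with q hq using h hq
  simp only [DD, this.fderiv_eq]

lemma line_deriv {f : XT n → ℝ} (hf : Sm f) (x v : EuclideanSpace ℝ (Fin n)) {t : ℝ}
    (ht : t < 0) (s : ℝ) :
    HasDerivAt (fun s : ℝ => f (x + s • v, t)) (Dx v f (x + s • v, t)) s := by
  have h1 : HasFDerivAt f (fderiv ℝ f (x + s • v, t)) (x + s • v, t) :=
    (hf.da (p := (x + s • v, t)) ht).hasFDerivAt
  have h2 : HasDerivAt (fun s : ℝ => ((x + s • v, t) : XT n)) (v, 0) s := by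
    refine HasDerivAt.prodMk ?_ (hasDerivAt_const _ _)
    simpa using ((hasDerivAt_id s).smul_const v).const_add x
  exact h1.comp_hasDerivAt s h2

lemma time_deriv {f : XT n → ℝ} (hf : Sm f) (x : EuclideanSpace ℝ (Fin n)) {t : ℝ}
    (ht : t < 0) : HasDerivAt (fun s : ℝ => f (x, s)) (Dt f (x, t)) t := by
  have h1 : HasFDerivAt f (fderiv ℝ f (x, t)) (x, t) := (hf.da (p := (x, t)) ht).hasFDerivAt
  have h2 : HasDerivAt (fun s : ℝ => ((x, s) : XT n)) (0, 1) t :=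
    (hasDerivAt_const _ _).prodMk (hasDerivAt_id t)
  exact h1.comp_hasDerivAt t h2

lemma second_nonpos {ψ ψ' : ℝ → ℝ} {k : ℝ} (h1 : ∀ s, HasDerivAt ψ (ψ' s) s)
    (h2 : HasDerivAt ψ' k 0) (hmax : ∀ s, ψ s ≤ ψ 0) : k ≤ 0 := by
  by_contra hk
  push Not at hk
  have hd : deriv ψ = ψ' := funext fun s => (h1 s).deriv
  have hmx : IsLocalMax ψ 0 := Eventually.of_forall hmax
  have h0 : deriv ψ 0 = 0 := hmx.deriv_eq_zero
  have hmin : IsLocalMin ψ 0 := by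
    apply isLocalMin_of_deriv_deriv_pos _ h0 (h1 0).continuousAt
    rw [hd, h2.deriv]; exact hk
  have hc : ψ =ᶠ[𝓝 0] fun _ => ψ 0 := by
    filter_upwards [hmin] with s hs using le_antisymm (hmax s) hs
  have := hc.deriv.deriv_eq
  rw [hd, h2.deriv] at this
  simp at this
  linarith

lemma second_nonneg {ψ ψ' : ℝ → ℝ} {k : ℝ} (h1 : ∀ s, HasDerivAt ψ (ψ' s) s)
    (h2 : HasDerivAt ψ' k 0) (hmin : ∀ s, ψ 0 ≤ ψ s) : 0 ≤ k := by
  have := second_nonpos (ψ := fun s => - ψ s) (ψ' := fun s => - ψ' s) (k := -k)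
    (fun s => (h1 s).neg) h2.neg (fun s => neg_le_neg (hmin s))
  linarith

lemma first_zero {ψ : ℝ → ℝ} {k : ℝ} (h1 : HasDerivAt ψ k 0)
    (hmax : ∀ s, ψ s ≤ ψ 0) : k = 0 := by
  have hmx : IsLocalMax ψ 0 := Eventually.of_forall hmax
  exact hmx.hasDerivAt_eq_zero h1

lemma left_nonneg {ψ : ℝ → ℝ} {k t : ℝ} (h1 : HasDerivAt ψ k t)
    (hmax : ∀ s ≤ t, ψ s ≤ ψ t) : 0 ≤ k := by
  by_contra hk
  push Not at hk
  have h2 := h1.hasDerivWithinAt (s := Iio t)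
  rw [hasDerivWithinAt_iff_tendsto_slope' (by simp)] at h2
  have h3 : ∀ᶠ s in 𝓝[<] t, slope ψ t s < 0 := h2.eventually (gt_mem_nhds hk)
  obtain ⟨s, hs, hs'⟩ := (h3.and self_mem_nhdsWithin).exists
  have hs2a : s < t := hs'
  rw [slope_def_field, div_neg_iff] at hs
  have := hmax s hs2a.le
  rcases hs with h | h <;> linarith [h.1, h.2]

lemma exists_max {Y : Type*} [NormedAddCommGroup Y] [ProperSpace Y] {Ψ : Y → ℝ} {S : Set Y}
    (hS : IsClosed S) (hc : ContinuousOn Ψ S) {p0 : Y} (h0 : p0 ∈ S) (r : ℝ)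
    (hr : ∀ p ∈ S, r < ‖p‖ → Ψ p ≤ Ψ p0) : ∃ p ∈ S, ∀ q ∈ S, Ψ q ≤ Ψ p := by
  have hK : IsCompact (S ∩ Metric.closedBall 0 (max r ‖p0‖)) :=
    (isCompact_closedBall _ _).inter_left hS
  have hp0 : p0 ∈ S ∩ Metric.closedBall 0 (max r ‖p0‖) := ⟨h0, by simp⟩
  obtain ⟨p, hp, hmax⟩ := hK.exists_isMaxOn ⟨p0, hp0⟩ (hc.mono inter_subset_left)
  refine ⟨p, hp.1, fun q hq => ?_⟩
  by_cases h : ‖q‖ ≤ max r ‖p0‖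
  · exact hmax ⟨hq, by simpa using h⟩
  · push Not at h
    exact (hr q hq (lt_of_le_of_lt (le_max_left _ _) h)).trans (hmax hp0)

/-- basis independence of the trace of a bilinear form -/
lemma trace_basis (b b' : OrthonormalBasis (Fin n) ℝ (EuclideanSpace ℝ (Fin n)))
    (B : EuclideanSpace ℝ (Fin n) →ₗ[ℝ] EuclideanSpace ℝ (Fin n) →ₗ[ℝ] ℝ) :
    ∑ i, B (b i) (b i) = ∑ i, B (b' i) (b' i) := by
  have h : ∀ i, B (b i) (b i) = ∑ j, ∑ k, (inner ℝ (b' j) (b i)) * (inner ℝ (b' k) (b i)) *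
      B (b' j) (b' k) := by
    intro i
    conv_lhs => rw [← b'.sum_repr' (b i)]
    simp only [map_sum, LinearMap.sum_apply, map_smul, LinearMap.smul_apply, smul_eq_mul,
      Finset.mul_sum]
    rw [Finset.sum_comm]
    refine Finset.sum_congr rfl fun j _ => Finset.sum_congr rfl fun k _ => by ring
  simp_rw [h]
  rw [Finset.sum_comm]
  refine Finset.sum_congr rfl fun j _ => ?_
  rw [Finset.sum_comm]
  have h2 : ∀ k, ∑ i, (inner ℝ (b' j) (b i)) * (inner ℝ (b' k) (b i)) * B (b' j) (b' k)
      = (if j = k then 1 else 0) * B (b' j) (b' k) := by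
    intro k
    rw [← Finset.sum_mul]
    congr 1
    have := b.sum_inner_mul_inner (b' j) (b' k)
    rw [orthonormal_iff_ite.mp b'.orthonormal j k] at this
    rw [← this]
    refine Finset.sum_congr rfl fun i _ => ?_
    rw [real_inner_comm (b' k) (b i)]
  simp_rw [h2]
  simp

lemma sq_basis (b b' : OrthonormalBasis (Fin n) ℝ (EuclideanSpace ℝ (Fin n)))
    (l : EuclideanSpace ℝ (Fin n) →ₗ[ℝ] ℝ) :
    ∑ i, (l (b i)) ^ 2 = ∑ i, (l (b' i)) ^ 2 := by
  have := trace_basis b b' (l.smulRight l)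
  simpa [pow_two] using this


lemma arctan_bounds {α β M : ℝ} (ha : 0 ≤ α) (hb : 0 ≤ β) (haM : α ≤ M) (hbM : β ≤ M) :
    Real.arctan β ≤ Real.arctan α + 1 / (1 + α ^ 2) * (β - α) ∧
    Real.arctan α + 1 / (1 + α ^ 2) * (β - α) - 2 * M * (β - α) ^ 2 ≤ Real.arctan β := by
  have key : ∃ ξ, 0 ≤ ξ ∧ ξ ≤ M ∧ 0 ≤ (ξ - α) * (β - α) ∧ |ξ - α| ≤ |β - α| ∧
      Real.arctan β - Real.arctan α = 1 / (1 + ξ ^ 2) * (β - α) := by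
    rcases lt_trichotomy α β with h | h | h
    · obtain ⟨ξ, hξ, he⟩ := exists_hasDerivAt_eq_slope Real.arctan (fun x => 1 / (1 + x ^ 2)) h
        Real.continuous_arctan.continuousOn (fun x _ => Real.hasDerivAt_arctan x)
      refine ⟨ξ, by linarith [hξ.1], by linarith [hξ.2], ?_, ?_, ?_⟩
      · nlinarith [hξ.1]
      · rw [abs_of_pos (by linarith [hξ.1]), abs_of_pos (by linarith)]; linarith [hξ.2]
      · rw [he]; field_simp [sub_ne_zero.2 h.ne']
    · exact ⟨α, ha, haM, by simp, by simp, by simp [h]⟩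
    · obtain ⟨ξ, hξ, he⟩ := exists_hasDerivAt_eq_slope Real.arctan (fun x => 1 / (1 + x ^ 2)) h
        Real.continuous_arctan.continuousOn (fun x _ => Real.hasDerivAt_arctan x)
      refine ⟨ξ, by linarith [hξ.1], by linarith [hξ.2], ?_, ?_, ?_⟩
      · nlinarith [hξ.1, hξ.2]
      · rw [abs_of_neg (by linarith [hξ.2]), abs_of_neg (by linarith)]; linarith [hξ.1]
      · rw [he]; field_simp [sub_ne_zero.2 h.ne']; ring
  obtain ⟨ξ, h0, hM, hs, habs, he⟩ := key
  have hid : 1 / (1 + ξ ^ 2) * (β - α) - 1 / (1 + α ^ 2) * (β - α)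
      = - ((ξ - α) * (β - α)) * ((ξ + α) / ((1 + ξ ^ 2) * (1 + α ^ 2))) := by
    field_simp; ring
  have hq0 : 0 ≤ (ξ + α) / ((1 + ξ ^ 2) * (1 + α ^ 2)) := by positivity
  have hq1 : (ξ + α) / ((1 + ξ ^ 2) * (1 + α ^ 2)) ≤ 2 * M := by
    rw [div_le_iff₀ (by positivity)]
    have : 1 ≤ (1 + ξ ^ 2) * (1 + α ^ 2) := by nlinarith [sq_nonneg ξ, sq_nonneg α, sq_nonneg (ξ*α)]
    nlinarith
  have hs2 : (ξ - α) * (β - α) ≤ (β - α) ^ 2 := by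
    calc (ξ - α) * (β - α) ≤ |(ξ - α) * (β - α)| := le_abs_self _
      _ = |ξ - α| * |β - α| := abs_mul _ _
      _ ≤ |β - α| * |β - α| := by gcongr
      _ = (β - α) ^ 2 := by rw [← sq, sq_abs]
  have hp := mul_nonneg hs hq0
  have hp2 : (ξ - α) * (β - α) * ((ξ + α) / ((1 + ξ ^ 2) * (1 + α ^ 2))) ≤ (β - α) ^ 2 * (2 * M) :=
    mul_le_mul hs2 hq1 hq0 (sq_nonneg _)
  constructor <;> nlinarith

lemma klein {A B : Matrix (Fin n) (Fin n) ℝ} (hA : A.IsHermitian) (hB : B.IsHermitian) {M : ℝ}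
    (hA0 : ∀ i, 0 ≤ hA.eigenvalues i) (hAM : ∀ i, hA.eigenvalues i ≤ M)
    (hB0 : ∀ i, 0 ≤ hB.eigenvalues i) (hBM : ∀ i, hB.eigenvalues i ≤ M) :
    let b := hA.eigenvectorBasis
    let γ := fun i => 1 / (1 + hA.eigenvalues i ^ 2)
    let q := fun (X : Matrix (Fin n) (Fin n) ℝ) i j =>
      inner ℝ (b i) (Matrix.toEuclideanLin X (b j))
    (∑ i, Real.arctan (hB.eigenvalues i)) ≤ (∑ i, Real.arctan (hA.eigenvalues i))
      + ∑ i, γ i * (q B i i - q A i i) ∧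
    (∑ i, Real.arctan (hA.eigenvalues i)) + ∑ i, γ i * (q B i i - q A i i)
      - 2 * M * ∑ i, ∑ j, (q B i j - q A i j) ^ 2 ≤ ∑ i, Real.arctan (hB.eigenvalues i) := by
  intro b γ q
  set b' := hB.eigenvectorBasis with hb'
  set α := hA.eigenvalues with hα
  set β := hB.eigenvalues with hβ
  have hAb : ∀ i, Matrix.toEuclideanLin A (b i) = α i • b i := by
    intro i
    have := hA.mulVec_eigenvectorBasis i
    ext k
    have h2 := congrFun this k
    simpa [Matrix.toEuclideanLin] using h2
  have hBb : ∀ i, Matrix.toEuclideanLin B (b' i) = β i • b' i := by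
    intro i
    have := hB.mulVec_eigenvectorBasis i
    ext k
    have h2 := congrFun this k
    simpa [Matrix.toEuclideanLin] using h2
  have hsB : (Matrix.toEuclideanLin B).IsSymmetric := Matrix.isSymmetric_toEuclideanLin_iff.2 hB
  set P : Fin n → Fin n → ℝ := fun i j => (inner ℝ (b' j) (b i)) ^ 2 with hP
  have hP0 : ∀ i j, 0 ≤ P i j := fun i j => sq_nonneg _
  have hrow : ∀ i, ∑ j, P i j = 1 := by
    intro i
    have := b'.sum_sq_norm_inner_right (b i)
    simpa [hP] using this
  have hcol : ∀ j, ∑ i, P i j = 1 := by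
    intro j
    have := b.sum_sq_norm_inner_left (b' j)
    simpa [hP] using this
  have hBin : ∀ i j, inner ℝ (b' j) (Matrix.toEuclideanLin B (b i)) = β j * inner ℝ (b' j) (b i) := by
    intro i j
    rw [← hsB, hBb, inner_smul_left]; simp
  have hqB : ∀ i, q B i i = ∑ j, P i j * β j := by
    intro i
    have := b'.sum_inner_mul_inner (b i) (Matrix.toEuclideanLin B (b i))
    simp only [q]
    rw [← this]
    refine Finset.sum_congr rfl fun j _ => ?_
    rw [hBin, real_inner_comm (b' j) (b i)]; simp only [hP]; ring
  have hqA : ∀ i, q A i i = α i := by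
    intro i
    simp only [q]
    rw [hAb, inner_smul_right]; simp
  have hlin : ∑ i, γ i * (q B i i - q A i i) = ∑ i, ∑ j, P i j * (γ i * (β j - α i)) := by
    refine Finset.sum_congr rfl fun i _ => ?_
    have : q A i i = ∑ j, P i j * α i := by rw [hqA, ← Finset.sum_mul, hrow, one_mul]
    rw [this, hqB, ← Finset.sum_sub_distrib, Finset.mul_sum]
    refine Finset.sum_congr rfl fun j _ => by ring
  have hquad : ∑ i, ∑ j, (q B i j - q A i j) ^ 2 = ∑ i, ∑ j, P i j * (β j - α i) ^ 2 := by
    rw [Finset.sum_comm]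
    refine Finset.sum_congr rfl fun i _ => ?_
    have h1 := b.sum_sq_norm_inner_right (Matrix.toEuclideanLin B (b i) - Matrix.toEuclideanLin A (b i))
    have h2 := b'.sum_sq_norm_inner_right (Matrix.toEuclideanLin B (b i) - Matrix.toEuclideanLin A (b i))
    rw [← h2] at h1
    simp only [Real.norm_eq_abs, sq_abs, inner_sub_right] at h1
    simp only [q]
    rw [h1]
    refine Finset.sum_congr rfl fun j _ => ?_
    rw [hBin, hAb, inner_smul_right]; simp only [hP]; ring
  have hFA : ∑ i, Real.arctan (α i) = ∑ i, ∑ j, P i j * Real.arctan (α i) := by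
    refine Finset.sum_congr rfl fun i _ => ?_
    rw [← Finset.sum_mul, hrow, one_mul]
  have hFB : ∑ i, Real.arctan (β i) = ∑ i, ∑ j, P i j * Real.arctan (β j) := by
    rw [Finset.sum_comm]
    refine Finset.sum_congr rfl fun i _ => ?_
    rw [← Finset.sum_mul, hcol, one_mul]
  rw [hlin, hquad, hFA, hFB, Finset.mul_sum]
  simp_rw [Finset.mul_sum]
  constructor
  · rw [← Finset.sum_add_distrib]
    refine Finset.sum_le_sum fun i _ => ?_
    rw [← Finset.sum_add_distrib]
    refine Finset.sum_le_sum fun j _ => ?_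
    rw [← mul_add]
    exact mul_le_mul_of_nonneg_left
      (arctan_bounds (hA0 i) (hB0 j) (hAM i) (hBM j)).1 (hP0 i j)
  · rw [← Finset.sum_add_distrib, ← Finset.sum_sub_distrib]
    refine Finset.sum_le_sum fun i _ => ?_
    rw [← Finset.sum_add_distrib, ← Finset.sum_sub_distrib]
    refine Finset.sum_le_sum fun j _ => ?_
    have := mul_le_mul_of_nonneg_left
      (arctan_bounds (hA0 i) (hB0 j) (hAM i) (hBM j)).2 (hP0 i j)
    simp only [γ]
    nlinarith

lemma DD_swap {f : XT n → ℝ} (hf : Sm f) (a b : XT n) :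
    EqOn (DD a (DD b f)) (DD b (DD a f)) (Om n) := fun _ hp => DD_comm hf hp a b

lemma DD_move {f : XT n → ℝ} (hf : Sm f) (v c d : XT n) :
    EqOn (DD v (DD c (DD d f))) (DD c (DD d (DD v f))) (Om n) := by
  intro p hp
  rw [DD_comm (hf.DD d) hp v c]
  exact DD_congr (DD_swap hf v d) c hp

lemma DD_move2 {f : XT n → ℝ} (hf : Sm f) (v w c d : XT n) :
    EqOn (DD v (DD w (DD c (DD d f)))) (DD c (DD d (DD v (DD w f)))) (Om n) := by
  intro p hp
  rw [DD_congr (DD_move hf w c d) v hp]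
  exact DD_move (hf.DD w) v c d hp

lemma DD_move1 {f : XT n → ℝ} (hf : Sm f) (v w c : XT n) :
    EqOn (DD v (DD w (DD c f))) (DD c (DD v (DD w f))) (Om n) := by
  intro p hp
  exact (DD_move hf c v w hp).symm

lemma Dx_lin (g : XT n → ℝ) (p : XT n) :
    ∃ l : EuclideanSpace ℝ (Fin n) →ₗ[ℝ] ℝ, ∀ v, l v = Dx v g p :=
  ⟨(fderiv ℝ g p).toLinearMap.comp (LinearMap.inl ℝ _ _), fun _ => rfl⟩

lemma Dx_bil {g : XT n → ℝ} (hg : Sm g) {p : XT n} (hp : p ∈ Om n) :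
    ∃ B : EuclideanSpace ℝ (Fin n) →ₗ[ℝ] EuclideanSpace ℝ (Fin n) →ₗ[ℝ] ℝ,
      ∀ v w, B v w = Dx v (Dx w g) p := by
  have hl : ∀ h : XT n → ℝ, ∀ v w, Dx (v + w) h p = Dx v h p + Dx w h p := by
    intro h v w
    obtain ⟨l, hl⟩ := Dx_lin h p
    rw [← hl, ← hl, ← hl, map_add]
  have hs : ∀ h : XT n → ℝ, ∀ (c : ℝ) v, Dx (c • v) h p = c * Dx v h p := by
    intro h c v
    obtain ⟨l, hl⟩ := Dx_lin h p
    rw [← hl, ← hl, map_smul, smul_eq_mul]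
  refine ⟨LinearMap.mk₂ ℝ (fun v w => Dx v (Dx w g) p) ?_ ?_ ?_ ?_, fun _ _ => rfl⟩
  · intro v w z; exact hl _ _ _
  · intro c v z; exact hs _ _ _
  · intro v w z
    simp only [Dx] at *
    rw [DD_comm hg hp, hl, DD_comm hg hp, DD_comm hg hp (z, 0)]
  · intro c v z
    simp only [Dx] at *
    rw [DD_comm hg hp, hs, DD_comm hg hp, smul_eq_mul]

lemma bil_matrix (B : EuclideanSpace ℝ (Fin n) →ₗ[ℝ] EuclideanSpace ℝ (Fin n) →ₗ[ℝ] ℝ)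
    (v w : EuclideanSpace ℝ (Fin n)) :
    B v w = inner ℝ v (Matrix.toEuclideanLin
      (Matrix.of fun k l => B (EuclideanSpace.single k 1) (EuclideanSpace.single l 1)) w) := by
  have hv : ∀ z : EuclideanSpace ℝ (Fin n), z = ∑ i, z i • EuclideanSpace.single i (1 : ℝ) := by
    intro z
    ext j
    simp [Finset.sum_apply, Pi.single_apply]
  conv_lhs => rw [hv v, hv w]
  simp only [map_sum, LinearMap.sum_apply, map_smul, LinearMap.smul_apply, smul_eq_mul]
  simp [PiLp.inner_apply, Matrix.toEuclideanLin, Matrix.mulVec, dotProduct, Finset.mul_sum,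
    Finset.sum_mul]
  rw [Finset.sum_comm]
  refine Finset.sum_congr rfl fun i _ => Finset.sum_congr rfl fun j _ => by ring

lemma bil_diag (B : EuclideanSpace ℝ (Fin n) →ₗ[ℝ] EuclideanSpace ℝ (Fin n) →ₗ[ℝ] ℝ)
    (hs : ∀ v w, B v w = B w v) :
    ∃ b : OrthonormalBasis (Fin n) ℝ (EuclideanSpace ℝ (Fin n)), ∀ i j, i ≠ j →
      B (b i) (b j) = 0 := by
  set A : Matrix (Fin n) (Fin n) ℝ :=
    Matrix.of fun k l => B (EuclideanSpace.single k 1) (EuclideanSpace.single l 1) with hAdef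
  have hA : A.IsHermitian := by
    ext i j
    simp [A, hs]
  refine ⟨hA.eigenvectorBasis, fun i j hij => ?_⟩
  have hAb : Matrix.toEuclideanLin A (hA.eigenvectorBasis j)
      = hA.eigenvalues j • hA.eigenvectorBasis j := by
    have := hA.mulVec_eigenvectorBasis j
    ext k
    have h2 := congrFun this k
    simpa [Matrix.toEuclideanLin] using h2
  rw [bil_matrix B, ← hAdef, hAb, inner_smul_right,
    orthonormal_iff_ite.mp hA.eigenvectorBasis.orthonormal i j]
  simp [hij]

/-- pairing of a bounded form with a nonnegative form -/
lemma pair_le (b₀ : OrthonormalBasis (Fin n) ℝ (EuclideanSpace ℝ (Fin n)))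
    (V B : EuclideanSpace ℝ (Fin n) →ₗ[ℝ] EuclideanSpace ℝ (Fin n) →ₗ[ℝ] ℝ)
    (hs : ∀ v w, V v w = V w v) {M : ℝ} (hV : ∀ v, ‖v‖ = 1 → V v v ≤ M)
    (hB : ∀ v, 0 ≤ B v v) :
    ∑ k, ∑ l, V (b₀ k) (b₀ l) * B (b₀ k) (b₀ l) ≤ M * ∑ k, B (b₀ k) (b₀ k) := by
  obtain ⟨b, hb⟩ := bil_diag V hs
  have h1 : ∀ k, ∑ l, V (b₀ k) (b₀ l) * B (b₀ k) (b₀ l) = ∑ l, V (b₀ k) (b l) * B (b₀ k) (b l) := by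
    intro k
    have := trace_basis b₀ b ((V (b₀ k)).smulRight (B (b₀ k)))
    simpa using this
  have h2 : ∀ l, ∑ k, V (b₀ k) (b l) * B (b₀ k) (b l) = ∑ k, V (b k) (b l) * B (b k) (b l) := by
    intro l
    have := trace_basis b₀ b ((V.flip (b l)).smulRight (B.flip (b l)))
    simpa using this
  rw [trace_basis b₀ b B]
  simp_rw [h1]
  rw [Finset.sum_comm]
  simp_rw [h2]
  rw [Finset.mul_sum]
  refine Finset.sum_le_sum fun l _ => ?_
  rw [Finset.sum_eq_single l (fun k _ hk => by rw [hb k l hk, zero_mul]) (by simp)]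
  exact mul_le_mul_of_nonneg_right (hV _ (b.norm_eq_one l)) (hB _)

/-- The equation at a point, in an eigenbasis of the Hessian at that point. -/
def Intf (f : XT n → ℝ) (M : ℝ) (p : XT n)
    (b : OrthonormalBasis (Fin n) ℝ (EuclideanSpace ℝ (Fin n))) (γ : Fin n → ℝ) : Prop :=
  (∀ i, 1 / (1 + M ^ 2) ≤ γ i ∧ γ i ≤ 1) ∧ ∀ q ∈ Om n,
    Dt f q - Dt f p ≤ ∑ i, γ i * (Dx (b i) (Dx (b i) f) q - Dx (b i) (Dx (b i) f) p) ∧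
    ∑ i, γ i * (Dx (b i) (Dx (b i) f) q - Dx (b i) (Dx (b i) f) p)
      - 2 * M * ∑ i, ∑ j, (Dx (b i) (Dx (b j) f) q - Dx (b i) (Dx (b j) f) p) ^ 2
      ≤ Dt f q - Dt f p

lemma slice_fderiv {f : XT n → ℝ} (hf : Sm f) {t : ℝ} (ht : t < 0)
    (x v : EuclideanSpace ℝ (Fin n)) :
    fderiv ℝ (fun y => f (y, t)) x v = Dx v f (x, t) := by
  have h1 : HasFDerivAt f (fderiv ℝ f (x, t)) (x, t) := (hf.da (p := (x, t)) ht).hasFDerivAt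
  have h2 : HasFDerivAt (fun y : EuclideanSpace ℝ (Fin n) => ((y, t) : XT n))
      (ContinuousLinearMap.inl ℝ _ _) x := hasFDerivAt_prodMk_left x t
  have h3 := (h1.comp x h2).fderiv
  change fderiv ℝ (f ∘ fun y => (y, t)) x v = _
  rw [h3]
  rfl

lemma slice_cd {f : XT n → ℝ} (hf : Sm f) {t : ℝ} (ht : t < 0) :
    ContDiff ℝ ∞ (fun y => f (y, t)) := by
  rw [contDiff_iff_contDiffAt]
  intro x
  exact (hf.cda (p := (x, t)) ht).comp x (contDiffAt_id.prodMk contDiffAt_const)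

lemma hess_eq {f : XT n → ℝ} (hf : Sm f) {t : ℝ} (ht : t < 0) (x : EuclideanSpace ℝ (Fin n))
    (i j : Fin n) : hess (fun y => f (y, t)) x i j =
      Dx (EuclideanSpace.single i 1) (Dx (EuclideanSpace.single j 1) f) (x, t) := by
  have hg := slice_cd hf ht
  have h2 : DifferentiableAt ℝ (fderiv ℝ (fun y => f (y, t))) x := by
    have := (hg.fderiv_right (m := 1) two_le_infty').differentiable (by simp)
    exact this x
  unfold hess
  rw [iteratedFDeriv_two_apply]
  simp only [Matrix.cons_val_zero, Matrix.cons_val_one]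
  rw [← slice_fderiv (hf.DD _) ht]
  have h3 : (fun y => DD (EuclideanSpace.single j 1, 0) f (y, t)) =
      fun y => fderiv ℝ (fun y => f (y, t)) y (EuclideanSpace.single j 1) := by
    funext y
    rw [slice_fderiv hf ht]
  rw [h3, (h2.hasFDerivAt.clm_apply (hasFDerivAt_const _ x)).fderiv]
  simp

lemma interface {f : XT n → ℝ} (hf : Sm f) {Θ M : ℝ}
    (h0 : ∀ q ∈ Om n, ∀ v, 0 ≤ Dx v (Dx v f) q)
    (hM : ∀ q ∈ Om n, ∀ v, ‖v‖ = 1 → Dx v (Dx v f) q ≤ M)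
    (hsym : ∀ x : EuclideanSpace ℝ (Fin n), ∀ t < (0 : ℝ),
      (hess (fun y => f (y, t)) x).IsHermitian)
    (hPDE : ∀ x : EuclideanSpace ℝ (Fin n), ∀ t (ht : t < (0 : ℝ)),
      Dt f (x, t) = (∑ i, Real.arctan ((hsym x t ht).eigenvalues i)) - Θ)
    (p : XT n) (hp : p ∈ Om n) : ∃ b γ, Intf f M p b γ := by
  have hq : ∀ x t, t < 0 → ∀ v w, Dx v (Dx w f) (x, t) =
      inner ℝ v (Matrix.toEuclideanLin (hess (fun y => f (y, t)) x) w) := by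
    intro x t ht v w
    obtain ⟨B, hB⟩ := Dx_bil hf (p := (x, t)) ht
    rw [← hB, bil_matrix]
    congr 3
    ext i j
    rw [hess_eq hf ht, Matrix.of_apply, hB]
  have hev : ∀ x t (ht : t < 0) i, (hsym x t ht).eigenvalues i =
      Dx ((hsym x t ht).eigenvectorBasis i) (Dx ((hsym x t ht).eigenvectorBasis i) f) (x, t) := by
    intro x t ht i
    have hAb : Matrix.toEuclideanLin (hess (fun y => f (y, t)) x) ((hsym x t ht).eigenvectorBasis i)
        = (hsym x t ht).eigenvalues i • (hsym x t ht).eigenvectorBasis i := by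
      have := (hsym x t ht).mulVec_eigenvectorBasis i
      ext k
      have h2 := congrFun this k
      simpa [Matrix.toEuclideanLin] using h2
    rw [hq x t ht, hAb, inner_smul_right]; simp
  have hev0 : ∀ x t (ht : t < 0) i, 0 ≤ (hsym x t ht).eigenvalues i := by
    intro x t ht i; rw [hev x t ht i]; exact h0 (x, t) ht _
  have hevM : ∀ x t (ht : t < 0) i, (hsym x t ht).eigenvalues i ≤ M := by
    intro x t ht i; rw [hev x t ht i]; exact hM (x, t) ht _ (OrthonormalBasis.norm_eq_one _ i)
  obtain ⟨x, t⟩ := p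
  have ht : t < 0 := hp
  refine ⟨(hsym x t ht).eigenvectorBasis, fun i => 1 / (1 + (hsym x t ht).eigenvalues i ^ 2),
    ?_, ?_⟩
  · intro i
    have h1 := hev0 x t ht i
    have h2 := hevM x t ht i
    constructor
    · apply one_div_le_one_div_of_le (by positivity)
      gcongr
    · rw [div_le_one (by positivity)]
      nlinarith [sq_nonneg ((hsym x t ht).eigenvalues i)]
  · rintro ⟨y, r⟩ hr
    have hr : r < 0 := hr
    have hk := klein (hsym x t ht) (hsym y r hr) (hev0 x t ht) (hevM x t ht) (hev0 y r hr) (hevM y r hr)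
    simp only at hk
    simp only [hPDE x t ht, hPDE y r hr, hq x t ht, hq y r hr]
    constructor <;> linarith [hk.1, hk.2]

lemma Dx_H {f : XT n → ℝ} (g : XT n → ℝ) (h : Fin n → XT n → ℝ) (γ : Fin n → ℝ)
    (hg : Sm g) (hh : ∀ i, Sm (h i)) (w : XT n) (hf : ∀ q, f q = g q - ∑ i, γ i * h i q) :
    EqOn (DD w f) (fun q => DD w g q - ∑ i, γ i * DD w (h i) q) (Om n) := by
  intro p hp
  have h1 : HasFDerivAt f (fderiv ℝ g p - ∑ i, γ i • fderiv ℝ (h i) p) p := by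
    rw [funext hf]
    refine (hg.da hp).hasFDerivAt.sub ?_
    refine HasFDerivAt.fun_sum fun i _ => ?_
    exact ((hh i).da hp).hasFDerivAt.const_mul (γ i)
  simp [DD, h1.fderiv]

lemma Sm_H {g : XT n → ℝ} {h : Fin n → XT n → ℝ} (γ : Fin n → ℝ)
    (hg : Sm g) (hh : ∀ i, Sm (h i)) : Sm (fun q => g q - ∑ i, γ i * h i q) :=
  ContDiffOn.sub hg (ContDiffOn.sum fun i _ => contDiffOn_const.mul (hh i))

lemma Intf_conseq {f : XT n → ℝ} (hf : Sm f) {M : ℝ} {p : XT n} (hp : p ∈ Om n)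
    {b : OrthonormalBasis (Fin n) ℝ (EuclideanSpace ℝ (Fin n))} {γ : Fin n → ℝ}
    (h : Intf f M p b γ) :
    (∀ v, Dt (Dx v f) p = ∑ i, γ i * Dx (b i) (Dx (b i) (Dx v f)) p) ∧
    ∃ B : EuclideanSpace ℝ (Fin n) →ₗ[ℝ] EuclideanSpace ℝ (Fin n) →ₗ[ℝ] ℝ,
      (∀ v w, B v w = Dt (Dx v (Dx w f)) p
        - ∑ i, γ i * Dx (b i) (Dx (b i) (Dx v (Dx w f))) p) ∧
      (∀ v, B v v ≤ 0) ∧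
      (∀ v, -(4 * M * ∑ i, ∑ j, (Dx v (Dx (b i) (Dx (b j) f)) p) ^ 2) ≤ B v v) := by
  set H : XT n → ℝ := fun q => Dt f q - ∑ i, γ i * Dx (b i) (Dx (b i) f) q with hH
  have hHS : Sm H := Sm_H γ (hf.DD _) (fun i => (hf.DD _).DD _)
  have hD1 : ∀ w, EqOn (DD w H) (fun q => DD w (Dt f) q - ∑ i, γ i * DD w (Dx (b i) (Dx (b i) f)) q)
      (Om n) := fun w => Dx_H _ _ γ (hf.DD _) (fun i => (hf.DD _).DD _) w (fun q => rfl)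
  have hD2 : ∀ v w, DD v (DD w H) p = DD v (DD w (Dt f)) p
      - ∑ i, γ i * DD v (DD w (Dx (b i) (Dx (b i) f))) p := by
    intro v w
    rw [DD_congr (hD1 w) v hp]
    exact Dx_H _ _ γ ((hf.DD _).DD _) (fun i => ((hf.DD _).DD _).DD _) v (fun q => rfl) hp
  have hHmax : ∀ q ∈ Om n, H q ≤ H p := by
    intro q hq
    have := (h.2 q hq).1
    simp only [hH, mul_sub, Finset.sum_sub_distrib] at *
    linarith
  obtain ⟨x, t⟩ := p
  have ht : t < 0 := hp
  refine ⟨fun v => ?_, ?_⟩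
  · have h1 := line_deriv hHS x v ht 0
    have h2 := first_zero h1 (fun s => by simpa using hHmax (x + s • v, t) ht)
    simp only [zero_smul, add_zero] at h2
    have h3 := hD1 (v, 0) hp
    simp only at h3
    unfold Dx at h2
    rw [h2] at h3
    have h4 : ∀ i, DD (v, 0) (Dx (b i) (Dx (b i) f)) (x, t) = Dx (b i) (Dx (b i) (Dx v f)) (x, t) :=
      fun i => DD_move hf _ _ _ hp
    simp only [h4] at h3
    rw [show Dt (Dx v f) (x, t) = DD (v, 0) (Dt f) (x, t) from DD_comm hf hp _ _]
    linarith
  · obtain ⟨B, hB⟩ := Dx_bil hHS hp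
    refine ⟨B, ?_, ?_, ?_⟩
    · intro v w
      rw [hB]
      unfold Dx at *
      rw [hD2, DD_move1 hf _ _ _ hp]
      congr 1
      exact Finset.sum_congr rfl fun i _ => by rw [DD_move2 hf _ _ _ _ hp]
    · intro v
      have h1 : ∀ s, HasDerivAt (fun s : ℝ => H (x + s • v, t)) _ s := line_deriv hHS x v ht
      have h2 := line_deriv (hHS.DD (v, 0)) x v ht 0
      simp only [zero_smul, add_zero] at h2
      rw [hB]
      exact second_nonpos h1 h2 (fun s => by simpa using hHmax (x + s • v, t) ht)
    · intro v
      have hS3 : ∀ i j, Sm (Dx (b i) (Dx (b j) f)) := fun i j => (hf.DD _).DD _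
      have h1 : ∀ s, HasDerivAt (fun s : ℝ => H (x + s • v, t) + 2 * M * ∑ i, ∑ j,
          (Dx (b i) (Dx (b j) f) (x + s • v, t) - Dx (b i) (Dx (b j) f) (x, t)) ^ 2)
          (Dx v H (x + s • v, t) + 2 * M * ∑ i, ∑ j,
            2 * ((Dx (b i) (Dx (b j) f) (x + s • v, t) - Dx (b i) (Dx (b j) f) (x, t)) *
              Dx v (Dx (b i) (Dx (b j) f)) (x + s • v, t))) s := by
        intro s
        refine (line_deriv hHS x v ht s).add (HasDerivAt.const_mul _ ?_)
        refine HasDerivAt.fun_sum fun i _ => HasDerivAt.fun_sum fun j _ => ?_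
        have := ((line_deriv (hS3 i j) x v ht s).sub_const (Dx (b i) (Dx (b j) f) (x, t))).pow 2
        exact this.congr_deriv (by push_cast; ring)
      have h2 : HasDerivAt (fun s : ℝ => (Dx v H (x + s • v, t) + 2 * M * ∑ i, ∑ j,
            2 * ((Dx (b i) (Dx (b j) f) (x + s • v, t) - Dx (b i) (Dx (b j) f) (x, t)) *
              Dx v (Dx (b i) (Dx (b j) f)) (x + s • v, t))))
          (Dx v (Dx v H) (x, t) + 2 * M * ∑ i, ∑ j,
            2 * (Dx v (Dx (b i) (Dx (b j) f)) (x, t)) ^ 2) 0 := by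
        have e1 := line_deriv (hHS.DD (v, 0)) x v ht 0
        simp only [zero_smul, add_zero] at e1
        refine e1.add (HasDerivAt.const_mul _ ?_)
        refine HasDerivAt.fun_sum fun i _ => HasDerivAt.fun_sum fun j _ => ?_
        have e2 := ((line_deriv (hS3 i j) x v ht 0).sub_const (Dx (b i) (Dx (b j) f) (x, t)))
        have e3 := line_deriv ((hS3 i j).DD (v, 0)) x v ht 0
        have := (e2.mul e3).const_mul 2
        simp only [zero_smul, add_zero, sub_self, zero_mul] at this
        exact this.congr_deriv (by push_cast; ring)
      have h3 := second_nonneg h1 h2 (fun s => by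
        have := (h.2 (x + s • v, t) ht).2
        simp only [zero_smul, add_zero, sub_self]
        simp only [hH, mul_sub, Finset.sum_sub_distrib] at *
        simp
        linarith)
      rw [hB]
      simp only [← Finset.mul_sum] at h3
      linarith

lemma line_normsq (x v : EuclideanSpace ℝ (Fin n)) (s : ℝ) :
    HasDerivAt (fun s : ℝ => ‖x + s • v‖ ^ 2) (2 * inner ℝ (x + s • v) v) s := by
  have h : HasDerivAt (fun s : ℝ => x + s • v) v s := by
    simpa using ((hasDerivAt_id s).smul_const v).const_add x
  exact h.norm_sq

lemma line_normsq2 (x v : EuclideanSpace ℝ (Fin n)) (s : ℝ) :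
    HasDerivAt (fun s : ℝ => 2 * inner ℝ (x + s • v) v) (2 * ‖v‖ ^ 2) s := by
  have h : HasDerivAt (fun s : ℝ => x + s • v) v s := by
    simpa using ((hasDerivAt_id s).smul_const v).const_add x
  have h2 := (h.inner ℝ (hasDerivAt_const s v)).const_mul 2
  exact h2.congr_deriv (by simp)

lemma tangent {f : XT n → ℝ} (hf : Sm f)
    (hconv : ∀ t < (0 : ℝ), ConvexOn ℝ Set.univ (fun y => f (y, t)))
    (x v : EuclideanSpace ℝ (Fin n)) {t : ℝ} (ht : t < 0) {s : ℝ} (hs : 0 < s) :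
    f (x, t) + s * Dx v f (x, t) ≤ f (x + s • v, t) := by
  have h1 := line_deriv hf x v ht 0
  simp only [zero_smul, add_zero] at h1
  have hc : ConvexOn ℝ Set.univ (fun s : ℝ => f (x + s • v, t)) := by
    have := (hconv t ht).comp_affineMap (AffineMap.lineMap x (x + v))
    simp only [Set.preimage_univ] at this
    have e : (fun s : ℝ => f (x + s • v, t)) =
        (fun y => f (y, t)) ∘ (AffineMap.lineMap x (x + v) : ℝ →ᵃ[ℝ] EuclideanSpace ℝ (Fin n)) := by
      funext s
      simp [AffineMap.lineMap_apply, add_comm]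
    rw [e]
    exact this
  have h2 := hc.le_slope_of_hasDerivAt (mem_univ _) (mem_univ _) hs h1
  rw [slope_def_field, le_div_iff₀ (by linarith)] at h2
  simp only [zero_smul, add_zero, sub_zero] at h2
  linarith

lemma Dx_neg (v : EuclideanSpace ℝ (Fin n)) (f : XT n → ℝ) (p : XT n) :
    Dx (-v) f p = - Dx v f p := by
  obtain ⟨l, hl⟩ := Dx_lin f p
  rw [← hl, ← hl, map_neg]

lemma hess_nonneg {f : XT n → ℝ} (hf : Sm f)
    (hconv : ∀ t < (0 : ℝ), ConvexOn ℝ Set.univ (fun y => f (y, t)))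
    (q : XT n) (hq : q ∈ Om n) (v : EuclideanSpace ℝ (Fin n)) : 0 ≤ Dx v (Dx v f) q := by
  obtain ⟨x, t⟩ := q
  have ht : t < 0 := hq
  have h1 : ∀ s, HasDerivAt (fun s : ℝ => f (x + s • v, t) - s * Dx v f (x, t))
      (Dx v f (x + s • v, t) - Dx v f (x, t)) s := by
    intro s
    have := (line_deriv hf x v ht s).sub ((hasDerivAt_id s).mul_const (Dx v f (x, t)))
    exact this.congr_deriv (by simp)
  have h2 := (line_deriv (hf.DD (v, 0)) x v ht 0).sub_const (Dx v f (x, t))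
  simp only [zero_smul, add_zero] at h2
  refine second_nonneg h1 h2 (fun s => ?_)
  simp only [zero_smul, add_zero, zero_mul, sub_zero]
  rcases lt_trichotomy s 0 with h | h | h
  · have := tangent hf hconv x (-v) ht (s := -s) (by linarith)
    rw [Dx_neg] at this
    simp only [neg_smul, smul_neg, neg_neg] at this
    linarith
  · simp [h]
  · have := tangent hf hconv x v ht h
    linarith

lemma grad_bound {f : XT n → ℝ} (hf : Sm f)
    (hconv : ∀ t < (0 : ℝ), ConvexOn ℝ Set.univ (fun y => f (y, t))) {c R : ℝ} (hc : 0 < c)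
    (hR : 0 ≤ R) (hg : ∀ q ∈ Om n, |f q| ≤ c * (‖q.1‖ ^ 2 + R)) (q : XT n) (hq : q ∈ Om n)
    (e : EuclideanSpace ℝ (Fin n)) (he : ‖e‖ = 1) :
    (Dx e f q) ^ 2 ≤ 36 * c ^ 2 * ‖q.1‖ ^ 2 + 4 * c ^ 2 * (2 + 2 * R) ^ 2 := by
  obtain ⟨x, t⟩ := q
  have ht : t < 0 := hq
  have key : ∀ e : EuclideanSpace ℝ (Fin n), ‖e‖ = 1 →
      Dx e f (x, t) ≤ c * (5 * ‖x‖ + (2 + 2 * R)) := by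
    intro e he
    have hL := norm_nonneg x
    have h1 := tangent hf hconv x e ht (s := ‖x‖ + 1) (by linarith)
    have h2 := hg (x, t) hq
    have h3 := hg (x + (‖x‖ + 1) • e, t) hq
    simp only at h2 h3
    have h4 : ‖x + (‖x‖ + 1) • e‖ ≤ 2 * ‖x‖ + 1 := by
      refine (norm_add_le _ _).trans ?_
      rw [norm_smul, he, Real.norm_of_nonneg (by linarith)]; linarith
    have h5 : ‖x + (‖x‖ + 1) • e‖ ^ 2 ≤ (2 * ‖x‖ + 1) ^ 2 := by gcongr
    have h6 := mul_le_mul_of_nonneg_left h5 hc.le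
    have h7 := (abs_le.1 h2).1
    have h8 := (abs_le.1 h3).2
    have h9 : (‖x‖ + 1) * Dx e f (x, t) ≤ (‖x‖ + 1) * (c * (5 * ‖x‖ + (2 + 2 * R))) := by
      have h10 : 0 ≤ c * (3 * ‖x‖ + 1 + 2 * R * ‖x‖) := by positivity
      nlinarith
    exact le_of_mul_le_mul_left h9 (by linarith)
  have k1 := key e he
  have k2 := key (-e) (by simpa using he)
  rw [Dx_neg] at k2
  have hL := norm_nonneg x
  have habs : |Dx e f (x, t)| ≤ |c * (5 * ‖x‖ + (2 + 2 * R))| := by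
    rw [abs_of_nonneg (a := c * _) (by positivity)]
    exact abs_le.2 ⟨by linarith, k1⟩
  have := sq_le_sq.2 habs
  refine this.trans ?_
  simp only
  have hsq : (5 * ‖x‖ + (2 + 2 * R)) ^ 2 ≤ 36 * ‖x‖ ^ 2 + 4 * (2 + 2 * R) ^ 2 := by
    nlinarith [sq_nonneg (11 * ‖x‖ - 5 * (2 + 2 * R)), sq_nonneg (2 + 2 * R)]
  nlinarith [mul_le_mul_of_nonneg_left hsq (sq_nonneg c)]

set_option maxHeartbeats 1000000 in
lemma hess_improve {f : XT n → ℝ} (hf : Sm f) (hn : 1 ≤ n) {M c K : ℝ} (hc : 0 < c) 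
    (hM : ∀ q ∈ Om n, ∀ v, ‖v‖ = 1 → Dx v (Dx v f) q ≤ M)
    (hI : ∀ p ∈ Om n, ∃ b γ, Intf f M p b γ) (hK : 0 ≤ K)
    (hgrad : ∀ q ∈ Om n, ∀ e, ‖e‖ = 1 → (Dx e f q) ^ 2 ≤ 36 * c ^ 2 * ‖q.1‖ ^ 2 + K)
    (p₀ : XT n) (hp₀ : p₀ ∈ Om n) (e : EuclideanSpace ℝ (Fin n)) (he : ‖e‖ = 1) :
    Dx e (Dx e f) p₀ ≤ √((1 + M ^ 2) * (64 * n * c ^ 2)) := by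
  have hn' : (1 : ℝ) ≤ n := by exact_mod_cast hn
  have main : ∀ B > 0, Dx e (Dx e f) p₀ ≤ √((1 + M ^ 2) * (64 * n * c ^ 2))
      + B * (K + 49 * c ^ 2 * ‖p₀.1‖ ^ 2) := by
    intro B hB
    set D := 49 * c ^ 2 * B with hD
    set s := 30 * n * c ^ 2 * B with hs
    have hDpos : 0 < D := by positivity
    have hspos : 0 < s := by positivity
    set Ψ : XT n → ℝ := fun p => Dx e (Dx e f) p + B * (Dx e f p) ^ 2 - D * ‖p.1‖ ^ 2 + s * p.2 with hΨ
    set S : Set (XT n) := {p | p.2 ≤ p₀.2} with hS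
    have hp02 : p₀.2 < 0 := hp₀
    have hSO : S ⊆ Om n := by
      intro p hp
      have h : p.2 ≤ p₀.2 := hp
      exact (show p.2 < 0 from lt_of_le_of_lt h hp02)
    have hScl : IsClosed S := isClosed_le continuous_snd continuous_const
    have hcont : ContinuousOn Ψ S := by
      have c1 : ContinuousOn (Dx e (Dx e f)) S := (((hf.DD _).DD _ : Sm _).continuousOn).mono hSO
      have c2 : ContinuousOn (Dx e f) S := ((hf.DD _ : Sm _).continuousOn).mono hSO
      have c3 : ContinuousOn (fun p : XT n => D * ‖p.1‖ ^ 2) S := by fun_prop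
      have c4 : ContinuousOn (fun p : XT n => s * p.2) S := by fun_prop
      exact ((c1.add ((c2.pow 2).const_mul B)).sub c3).add c4
    have hup : ∀ p ∈ S, Ψ p ≤ M + B * K - 13 * c ^ 2 * B * ‖p.1‖ ^ 2 + s * p.2 := by
      intro p hp
      have h1 := hM p (hSO hp) e he
      have h2 := mul_le_mul_of_nonneg_left (hgrad p (hSO hp) e he) hB.le
      simp only [hΨ, hD]
      nlinarith
    set m := 13 * c ^ 2 * B with hm
    have hmpos : 0 < m := by positivity
    set G := M + B * K - Ψ p₀ with hG
    obtain ⟨p, hpS, hpmax⟩ := exists_max hScl hcont (p0 := p₀) (le_refl p₀.2)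
      (1 + |G| / m + |G| / s) (by
        intro p hp hr
        refine (hup p hp).trans ?_
        have hp2 : p.2 < 0 := hSO hp
        have g1 : 0 ≤ |G| / m := by positivity
        have g2 : 0 ≤ |G| / s := by positivity
        have e1 : m * (|G| / m) = |G| := by field_simp
        have e2 : s * (|G| / s) = |G| := by field_simp
        have hGG : G ≤ |G| := le_abs_self G
        rw [Prod.norm_def, lt_max_iff] at hr
        rcases hr with hr | hr
        · have q1 : ‖p.1‖ ≤ ‖p.1‖ ^ 2 := by nlinarith
          have q2 : m * (|G| / m) ≤ m * ‖p.1‖ ^ 2 := by gcongr; linarith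
          nlinarith
        · rw [Real.norm_of_nonpos hp2.le] at hr
          have q2 : s * (|G| / s) ≤ s * (- p.2) := by gcongr; linarith
          nlinarith [mul_nonneg hmpos.le (sq_nonneg ‖p.1‖)])
    obtain ⟨x, t⟩ := p
    have hpO : (x, t) ∈ Om n := hSO hpS
    have ht : t < 0 := hpO
    have htp : t ≤ p₀.2 := hpS
    obtain ⟨b, γ, hI⟩ := hI (x, t) hpO
    obtain ⟨hc1, Bf, hBf, hBneg, -⟩ := Intf_conseq hf hpO hI
    -- time derivative
    have dt : 0 ≤ Dt (Dx e (Dx e f)) (x, t) + B * (2 * Dx e f (x, t) * Dt (Dx e f) (x, t)) + s := by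
      have d1 := time_deriv ((hf.DD (e, 0)).DD (e, 0)) x ht
      have d2 := ((time_deriv (hf.DD (e, 0)) x ht).fun_pow 2).const_mul B
      have d3 := ((d1.fun_add d2).sub_const (D * ‖x‖ ^ 2)).fun_add ((hasDerivAt_id t).const_mul s)
      have := left_nonneg d3 (fun r hr => hpmax (x, r) (le_trans hr htp))
      simpa using this
    have dxx : ∀ i, Dx (b i) (Dx (b i) (Dx e (Dx e f))) (x, t)
        + B * (2 * (Dx (b i) (Dx e f) (x, t)) ^ 2
          + 2 * Dx e f (x, t) * Dx (b i) (Dx (b i) (Dx e f)) (x, t)) - 2 * D ≤ 0 := by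
      intro i
      have d1 : ∀ r : ℝ, HasDerivAt (fun r : ℝ => Ψ (x + r • b i, t))
          (Dx (b i) (Dx e (Dx e f)) (x + r • b i, t)
           + B * (2 * (Dx e f (x + r • b i, t) * Dx (b i) (Dx e f) (x + r • b i, t)))
           - D * (2 * inner ℝ (x + r • b i) (b i))) r := by
        intro r
        have a1 := line_deriv ((hf.DD (e, 0)).DD (e, 0)) x (b i) ht r
        have a2 := ((line_deriv (hf.DD (e, 0)) x (b i) ht r).fun_pow 2).const_mul B
        have a3 := (line_normsq x (b i) r).const_mul D
        exact (((a1.fun_add a2).fun_sub a3).add_const (s * t)).congr_deriv (by push_cast; ring)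
      have d2 : HasDerivAt (fun r : ℝ => Dx (b i) (Dx e (Dx e f)) (x + r • b i, t)
           + B * (2 * (Dx e f (x + r • b i, t) * Dx (b i) (Dx e f) (x + r • b i, t)))
           - D * (2 * inner ℝ (x + r • b i) (b i)))
          (Dx (b i) (Dx (b i) (Dx e (Dx e f))) (x, t)
        + B * (2 * (Dx (b i) (Dx e f) (x, t)) ^ 2
          + 2 * Dx e f (x, t) * Dx (b i) (Dx (b i) (Dx e f)) (x, t)) - 2 * D) 0 := by
        have a1 := line_deriv (((hf.DD (e, 0)).DD (e, 0)).DD (b i, 0)) x (b i) ht 0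
        have a2 := line_deriv (hf.DD (e, 0)) x (b i) ht 0
        have a2' := line_deriv ((hf.DD (e, 0)).DD (b i, 0)) x (b i) ht 0
        have a4 := ((a2.fun_mul a2').const_mul 2).const_mul B
        have a3 := (line_normsq2 x (b i) 0).const_mul D
        refine ((a1.fun_add a4).fun_sub a3).congr_deriv ?_
        simp only [zero_smul, add_zero, b.norm_eq_one]
        ring
      refine second_nonpos d1 d2 (fun r => ?_)
      have := hpmax (x + r • b i, t) htp
      simpa using this
    have hγ0 : ∀ i, 0 ≤ γ i := fun i => le_trans (by positivity) (hI.1 i).1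
    have hsum := Finset.sum_nonpos (s := Finset.univ) fun i _ =>
      mul_nonpos_of_nonneg_of_nonpos (hγ0 i) (dxx i)
    have hsplit : ∑ i, γ i * (Dx (b i) (Dx (b i) (Dx e (Dx e f))) (x, t)
        + B * (2 * (Dx (b i) (Dx e f) (x, t)) ^ 2
          + 2 * Dx e f (x, t) * Dx (b i) (Dx (b i) (Dx e f)) (x, t)) - 2 * D)
        = ∑ i, γ i * Dx (b i) (Dx (b i) (Dx e (Dx e f))) (x, t)
          + 2 * B * ∑ i, γ i * (Dx (b i) (Dx e f) (x, t)) ^ 2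
          + 2 * B * Dx e f (x, t) * ∑ i, γ i * Dx (b i) (Dx (b i) (Dx e f)) (x, t)
          - 2 * D * ∑ i, γ i := by
      simp only [Finset.mul_sum, ← Finset.sum_add_distrib, ← Finset.sum_sub_distrib]
      exact Finset.sum_congr rfl fun i _ => by ring
    rw [hsplit] at hsum
    have hb1 := hBf e e
    have hb2 := hBneg e
    have hb3 := hc1 e
    have hγs : ∑ i, γ i ≤ n := by
      calc ∑ i, γ i ≤ ∑ i : Fin n, (1 : ℝ) := Finset.sum_le_sum fun i _ => (hI.1 i).2
        _ = n := by simp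
    have hlow : (Dx e (Dx e f) (x, t)) ^ 2 ≤ (1 + M ^ 2) * ∑ i, γ i * (Dx (b i) (Dx e f) (x, t)) ^ 2 := by
      obtain ⟨l, hl⟩ := Dx_lin (Dx e f) (x, t)
      have h1 : l e = ∑ i, inner ℝ (b i) e * l (b i) := by
        conv_lhs => rw [← b.sum_repr' e]
        simp
      have h2 := Finset.sum_mul_sq_le_sq_mul_sq Finset.univ (fun i => inner ℝ (b i) e)
        (fun i => l (b i))
      have h3 := b.sum_sq_norm_inner_right e
      simp only [Real.norm_eq_abs, sq_abs] at h3
      rw [← h1, h3, he, one_pow, one_mul] at h2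
      rw [← hl]
      refine h2.trans ?_
      rw [Finset.mul_sum]
      refine Finset.sum_le_sum fun i _ => ?_
      rw [hl]
      have h5 := (hI.1 i).1
      rw [div_le_iff₀ (by positivity)] at h5
      nlinarith [mul_le_mul_of_nonneg_right h5 (sq_nonneg (Dx (b i) (Dx e f) (x, t)))]
    have hfin : ∑ i, γ i * (Dx (b i) (Dx e f) (x, t)) ^ 2 ≤ 64 * n * c ^ 2 := by
      have h1 : D * ∑ i, γ i ≤ D * n := by gcongr
      have h2 : B * ∑ i, γ i * (Dx (b i) (Dx e f) (x, t)) ^ 2 ≤ B * (64 * n * c ^ 2) := by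
        rw [hb3] at dt
        nlinarith
      exact le_of_mul_le_mul_left h2 hB
    have hroot : Dx e (Dx e f) (x, t) ≤ √((1 + M ^ 2) * (64 * n * c ^ 2)) := by
      apply Real.le_sqrt_of_sq_le
      refine hlow.trans ?_
      gcongr
    have h1 := hpmax p₀ (le_refl p₀.2)
    have h2 := mul_le_mul_of_nonneg_left (hgrad (x, t) hpO e he) hB.le
    simp only [hΨ] at h1 h2
    have h3 : s * t ≤ s * p₀.2 := by gcongr
    have h4 : 0 ≤ B * (Dx e f p₀) ^ 2 := by positivity
    have h5 : 0 ≤ m * ‖x‖ ^ 2 := by positivity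
    have hDm : D * ‖x‖ ^ 2 = 36 * c ^ 2 * B * ‖x‖ ^ 2 + m * ‖x‖ ^ 2 := by rw [hD, hm]; ring
    have hDp : D * ‖p₀.1‖ ^ 2 = B * (49 * c ^ 2 * ‖p₀.1‖ ^ 2) := by rw [hD]; ring
    clear_value D s m
    linarith
  by_contra hcon
  push Not at hcon
  set W := K + 49 * c ^ 2 * ‖p₀.1‖ ^ 2 with hW
  have hW0 : 0 ≤ W := by positivity
  set d := Dx e (Dx e f) p₀ - √((1 + M ^ 2) * (64 * n * c ^ 2)) with hd
  have hd0 : 0 < d := by linarith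
  have := main (d / (2 * (W + 1))) (by positivity)
  have h2 : d / (2 * (W + 1)) * W ≤ d / 2 := by
    rw [div_mul_eq_mul_div, div_le_div_iff₀ (by positivity) (by positivity)]
    nlinarith
  linarith

lemma small_hess {f : XT n → ℝ} (hf : Sm f) (hn : 1 ≤ n) {C c K : ℝ} (hc : 0 < c)
    (hc2 : c * (36 * n) ≤ 1)
    (h0 : ∀ q ∈ Om n, ∀ v, 0 ≤ Dx v (Dx v f) q)
    (hC : ∀ q ∈ Om n, ∀ v, ‖v‖ = 1 → Dx v (Dx v f) q ≤ C)
    (hI : ∀ M, (∀ q ∈ Om n, ∀ v, ‖v‖ = 1 → Dx v (Dx v f) q ≤ M) →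
      ∀ p ∈ Om n, ∃ b γ, Intf f M p b γ) (hK : 0 ≤ K)
    (hgrad : ∀ q ∈ Om n, ∀ e, ‖e‖ = 1 → (Dx e f q) ^ 2 ≤ 36 * c ^ 2 * ‖q.1‖ ^ 2 + K) :
    ∃ M : ℝ, 0 ≤ M ∧ 15 * (n : ℝ) * M ^ 2 ≤ 1 ∧ ∀ q ∈ Om n, ∀ v, ‖v‖ = 1 → Dx v (Dx v f) q ≤ M := by
  have hn' : (1 : ℝ) ≤ n := by exact_mod_cast hn
  set S : Set ℝ := {r | ∃ q ∈ Om n, ∃ v, ‖v‖ = 1 ∧ Dx v (Dx v f) q = r} with hS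
  have hbdd : BddAbove S := ⟨C, by rintro r ⟨q, hq, v, hv, rfl⟩; exact hC q hq v hv⟩
  have hM : ∀ q ∈ Om n, ∀ v, ‖v‖ = 1 → Dx v (Dx v f) q ≤ sSup S := fun q hq v hv =>
    le_csSup hbdd ⟨q, hq, v, hv, rfl⟩
  have hmem : ((0, -1) : XT n) ∈ Om n := by simp [Om]
  have hne : S.Nonempty := ⟨_, (0, -1), hmem,
    EuclideanSpace.single ⟨0, hn⟩ 1, by simp, rfl⟩
  have hM0 : 0 ≤ sSup S := by
    obtain ⟨r, hr⟩ := hne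
    have : 0 ≤ r := by obtain ⟨q, hq, v, hv, rfl⟩ := hr; exact h0 q hq v
    exact this.trans (le_csSup hbdd hr)
  refine ⟨sSup S, hM0, ?_, hM⟩
  have h1 : sSup S ≤ √((1 + (sSup S) ^ 2) * (64 * n * c ^ 2)) := by
    apply csSup_le hne
    rintro r ⟨q, hq, v, hv, rfl⟩
    exact hess_improve hf hn hc hM (hI _ hM) hK hgrad q hq v hv
  have h2 : (sSup S) ^ 2 ≤ (1 + (sSup S) ^ 2) * (64 * n * c ^ 2) := by
    rw [← Real.sq_sqrt (show 0 ≤ (1 + (sSup S) ^ 2) * (64 * n * c ^ 2) by positivity)]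
    gcongr
  have h3 : (c * (36 * n)) ^ 2 ≤ 1 := by
    apply pow_le_one₀ (by positivity) hc2
  have h4 : 20 * n * (64 * n * c ^ 2) ≤ 1 := by nlinarith
  have h5 : 20 * n * (sSup S) ^ 2 ≤ (1 + (sSup S) ^ 2) := by
    have := mul_le_mul_of_nonneg_left h2 (show (0 : ℝ) ≤ 20 * n by positivity)
    have h6 := mul_le_mul_of_nonneg_left h4 (show (0 : ℝ) ≤ 1 + (sSup S) ^ 2 by positivity)
    nlinarith
  nlinarith [sq_nonneg (sSup S)]

lemma second_nonpos_loc {ψ ψ' : ℝ → ℝ} {k : ℝ} (h1 : ∀ᶠ s in 𝓝 (0 : ℝ), HasDerivAt ψ (ψ' s) s)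
    (h2 : HasDerivAt ψ' k 0) (hmax : ∀ s, ψ s ≤ ψ 0) : k ≤ 0 := by
  by_contra hk
  push Not at hk
  have hd : deriv ψ =ᶠ[𝓝 0] ψ' := h1.mono fun s hs => hs.deriv
  have hmx : IsLocalMax ψ 0 := Eventually.of_forall hmax
  have h0 : deriv ψ 0 = 0 := hmx.deriv_eq_zero
  have hmin : IsLocalMin ψ 0 := by
    apply isLocalMin_of_deriv_deriv_pos _ h0 h1.self_of_nhds.continuousAt
    rw [hd.deriv_eq, h2.deriv]; exact hk
  have hc : ψ =ᶠ[𝓝 0] fun _ => ψ 0 := by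
    filter_upwards [hmin] with s hs using le_antisymm (hmax s) hs
  have := hc.deriv.deriv_eq
  rw [hd.deriv_eq, h2.deriv] at this
  simp at this
  linarith

lemma third_sq {f : XT n → ℝ} (hf : Sm f) {p : XT n} (hp : p ∈ Om n)
    (o b : OrthonormalBasis (Fin n) ℝ (EuclideanSpace ℝ (Fin n))) :
    ∑ k, ∑ i, ∑ j, (Dx (o k) (Dx (b i) (Dx (b j) f)) p) ^ 2 =
      ∑ i, ∑ k, ∑ l, (Dx (b i) (Dx (o k) (Dx (o l) f)) p) ^ 2 := by
  rw [Finset.sum_comm]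
  refine Finset.sum_congr rfl fun i _ => Finset.sum_congr rfl fun k _ => ?_
  obtain ⟨L, hL⟩ := Dx_lin (Dx (o k) (Dx (b i) f)) p
  have h1 : ∀ w, Dx (o k) (Dx (b i) (Dx w f)) p = L w := by
    intro w
    rw [hL]
    exact (DD_move hf (w, 0) (o k, 0) (b i, 0) hp).symm
  simp only [h1]
  rw [sq_basis b o L]
  refine Finset.sum_congr rfl fun l _ => ?_
  rw [← h1]
  congr 1
  exact DD_comm (hf.DD _) hp _ _

/-- the concave modulus along a line -/
lemma phi_line (z w : EuclideanSpace ℝ (Fin n)) (s : ℝ) (h : z + s • w ≠ 0) :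
    HasDerivAt (fun s : ℝ => (‖z + s • w‖ ^ 2) ^ (1 / 4 : ℝ))
      ((2 * inner ℝ (z + s • w) w) * (1 / 4 : ℝ) * (‖z + s • w‖ ^ 2) ^ (-(3 / 4) : ℝ)) s := by
  have h1 := (line_normsq z w s).rpow_const (p := 1 / 4) (Or.inl (by
    have := norm_pos_iff.2 h
    positivity))
  exact h1.congr_deriv (by norm_num)

lemma phi_line2 (z w : EuclideanSpace ℝ (Fin n)) (h : z ≠ 0) :
    HasDerivAt (fun s : ℝ => (2 * inner ℝ (z + s • w) w) * (1 / 4 : ℝ) *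
        (‖z + s • w‖ ^ 2) ^ (-(3 / 4) : ℝ))
      (1 / 2 * (‖z‖ ^ 2) ^ (-(3 / 4) : ℝ) * ‖w‖ ^ 2
        - 3 / 4 * (‖z‖ ^ 2) ^ (-(7 / 4) : ℝ) * (inner ℝ z w) ^ 2) 0 := by
  have h1 := (line_normsq z w 0).rpow_const (p := -(3 / 4)) (Or.inl (by
    have := norm_pos_iff.2 h
    simp only [zero_smul, add_zero]
    positivity))
  have h2 := ((line_normsq2 z w 0).mul_const (1 / 4 : ℝ)).fun_mul h1
  refine h2.congr_deriv ?_
  simp only [zero_smul, add_zero]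
  norm_num
  ring

lemma max_line {ι : Type*} [Fintype ι] (F : ι → XT n → ℝ)
    (hF : ∀ a, Sm (F a)) {x y : EuclideanSpace ℝ (Fin n)} (hxy : x ≠ y) {t : ℝ} (ht : t < 0)
    {N ε : ℝ}
    (hmax : ∀ x' y', ∑ a, (F a (x', t) - F a (y', t)) ^ 2 - N * (‖x' - y'‖ ^ 2) ^ (1 / 4 : ℝ)
      - ε * (‖x'‖ ^ 2 + ‖y'‖ ^ 2) ≤ ∑ a, (F a (x, t) - F a (y, t)) ^ 2
      - N * (‖x - y‖ ^ 2) ^ (1 / 4 : ℝ) - ε * (‖x‖ ^ 2 + ‖y‖ ^ 2))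
    (v w : EuclideanSpace ℝ (Fin n)) :
    ∑ a, 2 * (Dx v (F a) (x, t) - Dx w (F a) (y, t)) ^ 2
      + ∑ a, 2 * (F a (x, t) - F a (y, t)) * (Dx v (Dx v (F a)) (x, t) - Dx w (Dx w (F a)) (y, t))
      - N * (1 / 2 * (‖x - y‖ ^ 2) ^ (-(3 / 4) : ℝ) * ‖v - w‖ ^ 2
        - 3 / 4 * (‖x - y‖ ^ 2) ^ (-(7 / 4) : ℝ) * (inner ℝ (x - y) (v - w)) ^ 2)
      - ε * (2 * ‖v‖ ^ 2 + 2 * ‖w‖ ^ 2) ≤ 0 := by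
  have hz : x - y ≠ 0 := sub_ne_zero.2 hxy
  have hev : ∀ᶠ s : ℝ in 𝓝 0, (x - y) + s • (v - w) ≠ 0 := by
    have hc : Continuous fun s : ℝ => (x - y) + s • (v - w) := by fun_prop
    have := hc.continuousAt (x := 0)
    exact this.eventually_ne (by simpa using hz)
  have d1 : ∀ᶠ s : ℝ in 𝓝 0, HasDerivAt (fun s : ℝ =>
      ∑ a, (F a (x + s • v, t) - F a (y + s • w, t)) ^ 2
      - N * (‖(x - y) + s • (v - w)‖ ^ 2) ^ (1 / 4 : ℝ)
      - ε * (‖x + s • v‖ ^ 2 + ‖y + s • w‖ ^ 2))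
      (∑ a, 2 * ((F a (x + s • v, t) - F a (y + s • w, t))
          * (Dx v (F a) (x + s • v, t) - Dx w (F a) (y + s • w, t)))
       - N * ((2 * inner ℝ ((x - y) + s • (v - w)) (v - w)) * (1 / 4 : ℝ) *
        (‖(x - y) + s • (v - w)‖ ^ 2) ^ (-(3 / 4) : ℝ))
       - ε * (2 * inner ℝ (x + s • v) v + 2 * inner ℝ (y + s • w) w)) s := by
    filter_upwards [hev] with s hs
    refine HasDerivAt.fun_sub (HasDerivAt.fun_sub ?_ ((phi_line _ _ s hs).const_mul N))
      (((line_normsq x v s).fun_add (line_normsq y w s)).const_mul ε)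
    refine HasDerivAt.fun_sum fun a _ => ?_
    have := ((line_deriv (hF a) x v ht s).fun_sub (line_deriv (hF a) y w ht s)).fun_pow 2
    exact this.congr_deriv (by push_cast; ring)
  have d2 : HasDerivAt (fun s : ℝ => ∑ a, 2 * ((F a (x + s • v, t) - F a (y + s • w, t))
          * (Dx v (F a) (x + s • v, t) - Dx w (F a) (y + s • w, t)))
       - N * ((2 * inner ℝ ((x - y) + s • (v - w)) (v - w)) * (1 / 4 : ℝ) *
        (‖(x - y) + s • (v - w)‖ ^ 2) ^ (-(3 / 4) : ℝ))
       - ε * (2 * inner ℝ (x + s • v) v + 2 * inner ℝ (y + s • w) w))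
      (∑ a, (2 * (Dx v (F a) (x, t) - Dx w (F a) (y, t)) ^ 2
      + 2 * (F a (x, t) - F a (y, t)) * (Dx v (Dx v (F a)) (x, t) - Dx w (Dx w (F a)) (y, t)))
      - N * (1 / 2 * (‖x - y‖ ^ 2) ^ (-(3 / 4) : ℝ) * ‖v - w‖ ^ 2
        - 3 / 4 * (‖x - y‖ ^ 2) ^ (-(7 / 4) : ℝ) * (inner ℝ (x - y) (v - w)) ^ 2)
      - ε * (2 * ‖v‖ ^ 2 + 2 * ‖w‖ ^ 2)) 0 := by
    refine HasDerivAt.fun_sub (HasDerivAt.fun_sub ?_ ((phi_line2 _ _ hz).const_mul N))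
      (((line_normsq2 x v 0).fun_add (line_normsq2 y w 0)).const_mul ε)
    refine HasDerivAt.fun_sum fun a _ => ?_
    have e1 := (line_deriv (hF a) x v ht 0).fun_sub (line_deriv (hF a) y w ht 0)
    have e2 := (line_deriv ((hF a).DD (v, 0)) x v ht 0).fun_sub
      (line_deriv ((hF a).DD (w, 0)) y w ht 0)
    refine ((e1.fun_mul e2).const_mul 2).congr_deriv ?_
    simp only [zero_smul, add_zero]
    ring
  have := second_nonpos_loc d1 d2 (fun s => by
    have := hmax (x + s • v) (y + s • w)
    have e : x + s • v - (y + s • w) = (x - y) + s • (v - w) := by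
      rw [smul_sub]; abel
    rw [e] at this
    simpa using this)
  rw [Finset.sum_add_distrib] at this
  exact this

lemma refl_basis (z : EuclideanSpace ℝ (Fin n))
    (b : OrthonormalBasis (Fin n) ℝ (EuclideanSpace ℝ (Fin n))) :
    ∃ b₂ : OrthonormalBasis (Fin n) ℝ (EuclideanSpace ℝ (Fin n)),
      ∀ i, b i - b₂ i = (2 * inner ℝ z (b i) / ‖z‖ ^ 2) • z := by
  refine ⟨b.map ((ℝ ∙ z)ᗮ).reflection, fun i => ?_⟩
  rw [OrthonormalBasis.map_apply, Submodule.reflection_orthogonal_apply,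
    Submodule.reflection_singleton_apply]
  simp only [sub_eq_add_neg, neg_neg, neg_add, ← smul_assoc]
  simp
  rw [mul_div_assoc, ← smul_smul, two_smul]

lemma Dx_zero (g : XT n → ℝ) (p : XT n) : Dx (0 : EuclideanSpace ℝ (Fin n)) g p = 0 := by
  obtain ⟨l, hl⟩ := Dx_lin g p
  rw [← hl, map_zero]

lemma lap_basis {g : XT n → ℝ} (hg : Sm g) {p : XT n} (hp : p ∈ Om n)
    (b b' : OrthonormalBasis (Fin n) ℝ (EuclideanSpace ℝ (Fin n))) :
    ∑ i, Dx (b i) (Dx (b i) g) p = ∑ i, Dx (b' i) (Dx (b' i) g) p := by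
  obtain ⟨B, hB⟩ := Dx_bil hg hp
  simp only [← hB]
  exact trace_basis b b' B

set_option maxHeartbeats 1000000 in
/-- the second order conditions at an interior maximum of the doubled function, combined -/
lemma second_order {ι : Type*} [Fintype ι] (F : ι → XT n → ℝ)
    (hF : ∀ a, Sm (F a)) {x y : EuclideanSpace ℝ (Fin n)} (hxy : x ≠ y) {t : ℝ} (ht : t < 0)
    {N ε κ μ : ℝ} (hn : 1 ≤ n) (hN : 0 ≤ N) (hε : 0 ≤ ε) (hκ : κ * (3 * n) = 1)
    (hμ : μ ≤ κ)
    (b b' : OrthonormalBasis (Fin n) ℝ (EuclideanSpace ℝ (Fin n))) (γ γ' : Fin n → ℝ)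
    (hγ : ∀ i, 1 - μ ≤ γ i ∧ γ i ≤ 1) (hγ' : ∀ i, 1 - μ ≤ γ' i ∧ γ' i ≤ 1)
    (hmax : ∀ x' y', ∑ a, (F a (x', t) - F a (y', t)) ^ 2 - N * (‖x' - y'‖ ^ 2) ^ (1 / 4 : ℝ)
      - ε * (‖x'‖ ^ 2 + ‖y'‖ ^ 2) ≤ ∑ a, (F a (x, t) - F a (y, t)) ^ 2
      - N * (‖x - y‖ ^ 2) ^ (1 / 4 : ℝ) - ε * (‖x‖ ^ 2 + ‖y‖ ^ 2)) :
    2 * (κ - μ) * (∑ i, ∑ a, (Dx (b i) (F a) (x, t)) ^ 2 + ∑ i, ∑ a, (Dx (b' i) (F a) (y, t)) ^ 2)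
    + ∑ a, 2 * (F a (x, t) - F a (y, t)) * (∑ i, γ i * Dx (b i) (Dx (b i) (F a)) (x, t)
      - ∑ i, γ' i * Dx (b' i) (Dx (b' i) (F a)) (y, t))
    + N * (‖x - y‖ ^ 2) ^ (-(3 / 4) : ℝ) / 3 ≤ 6 * n * ε := by
  have hn' : (1 : ℝ) ≤ n := by exact_mod_cast hn
  have hz : x - y ≠ 0 := sub_ne_zero.2 hxy
  have hρ : 0 < ‖x - y‖ ^ 2 := by have := norm_pos_iff.2 hz; positivity
  set P := (‖x - y‖ ^ 2) ^ (-(3 / 4) : ℝ) with hP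
  have hP0 : 0 < P := Real.rpow_pos_of_pos hρ _
  have hP7 : (‖x - y‖ ^ 2) ^ (-(7 / 4) : ℝ) * ‖x - y‖ ^ 2 = P := by
    rw [hP, ← Real.rpow_add_one hρ.ne']
    norm_num
  have hP70 : 0 < (‖x - y‖ ^ 2) ^ (-(7 / 4) : ℝ) := Real.rpow_pos_of_pos hρ _
  have ml := max_line F hF hxy ht hmax
  set G : EuclideanSpace ℝ (Fin n) → ℝ := fun v =>
    ∑ a, 2 * (F a (x, t) - F a (y, t)) * Dx v (Dx v (F a)) (x, t) with hG
  set H : EuclideanSpace ℝ (Fin n) → ℝ := fun v =>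
    ∑ a, 2 * (F a (x, t) - F a (y, t)) * Dx v (Dx v (F a)) (y, t) with hH
  have h1 : ∀ v, ‖v‖ = 1 → 2 * ∑ a, (Dx v (F a) (x, t)) ^ 2 + G v ≤ N * P / 2 + 2 * ε := by
    intro v hv
    have := ml v 0
    simp only [Dx_zero, sub_zero, hv, norm_zero] at this
    have h3 : 0 ≤ N * ((‖x - y‖ ^ 2) ^ (-(7 / 4) : ℝ) * (inner ℝ (x - y) v) ^ 2) := by positivity
    rw [← Finset.mul_sum] at this
    simp only [hG]
    nlinarith
  have h2 : ∀ v, ‖v‖ = 1 → 2 * ∑ a, (Dx v (F a) (y, t)) ^ 2 - H v ≤ N * P / 2 + 2 * ε := by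
    intro v hv
    have := ml 0 v
    simp only [Dx_zero, zero_sub, hv, norm_zero, norm_neg, mul_neg, neg_sq, inner_neg_right,
      Finset.sum_neg_distrib] at this
    have h3 : 0 ≤ N * ((‖x - y‖ ^ 2) ^ (-(7 / 4) : ℝ) * (inner ℝ (x - y) v) ^ 2) := by positivity
    rw [← Finset.mul_sum] at this
    simp only [hH]
    nlinarith
  obtain ⟨b₂, hb₂⟩ := refl_basis (x - y) b
  have h3 : ∀ i, G (b i) - H (b₂ i) + N * P * ((inner ℝ (b i) (x - y)) ^ 2 / ‖x - y‖ ^ 2)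
      - 4 * ε ≤ 0 := by
    intro i
    have := ml (b i) (b₂ i)
    rw [hb₂ i, b.norm_eq_one, b₂.norm_eq_one, norm_smul, inner_smul_right,
      real_inner_self_eq_norm_sq, mul_pow, Real.norm_eq_abs, sq_abs] at this
    have hs0 : 0 ≤ ∑ a, 2 * (Dx (b i) (F a) (x, t) - Dx (b₂ i) (F a) (y, t)) ^ 2 :=
      Finset.sum_nonneg fun a _ => by positivity
    have hsp : ∑ a, 2 * (F a (x, t) - F a (y, t)) *
        (Dx (b i) (Dx (b i) (F a)) (x, t) - Dx (b₂ i) (Dx (b₂ i) (F a)) (y, t))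
        = G (b i) - H (b₂ i) := by
      simp only [hG, hH, ← Finset.sum_sub_distrib]
      exact Finset.sum_congr rfl fun a _ => by ring
    rw [hsp, real_inner_comm] at this
    set ip := inner ℝ (b i) (x - y) with hip
    set ρ := ‖x - y‖ ^ 2 with hρd
    have e1 : 1 / 2 * P * ((2 * ip / ρ) ^ 2 * ρ) = 2 * P * (ip ^ 2 / ρ) := by
      field_simp
    have e2 : 3 / 4 * ρ ^ (-(7 / 4) : ℝ) * (2 * ip / ρ * ρ) ^ 2 = 3 * P * (ip ^ 2 / ρ) := by
      rw [← hP7]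
      field_simp
      ring
    rw [e1, e2] at this
    nlinarith
  have hsumsq : ∑ i, (inner ℝ (b i) (x - y)) ^ 2 / ‖x - y‖ ^ 2 = 1 := by
    have := b.sum_sq_norm_inner_right (x - y)
    simp only [Real.norm_eq_abs, sq_abs] at this
    rw [← Finset.sum_div, this, div_self hρ.ne']
  have hHb : ∑ i, H (b₂ i) = ∑ i, H (b' i) := by
    simp only [hH]
    rw [Finset.sum_comm, Finset.sum_comm (s := Finset.univ (α := Fin n))]
    refine Finset.sum_congr rfl fun a _ => ?_
    rw [← Finset.mul_sum, ← Finset.mul_sum, lap_basis (hF a) (p := (y, t)) ht b₂ b']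
  have S3 : ∑ i, G (b i) - ∑ i, H (b' i) + N * P - 4 * n * ε ≤ 0 := by
    have := Finset.sum_nonpos (s := Finset.univ) fun i _ => h3 i
    simp only [Finset.sum_add_distrib, Finset.sum_sub_distrib, ← Finset.mul_sum] at this
    rw [hsumsq, hHb] at this
    simp at this
    linarith
  have hκ0 : 0 ≤ κ := by
    by_contra hneg
    push Not at hneg
    nlinarith
  have hκ1 : κ ≤ 1 / 3 := by nlinarith
  have hX : 0 ≤ N * P / 2 + 2 * ε := by positivity
  have S1 : 2 * (κ - μ) * ∑ i, ∑ a, (Dx (b i) (F a) (x, t)) ^ 2 + ∑ i, (γ i - (1 - κ)) * G (b i)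
      ≤ 1 / 3 * (N * P / 2 + 2 * ε) := by
    have : ∀ i ∈ Finset.univ, 2 * (κ - μ) * ∑ a, (Dx (b i) (F a) (x, t)) ^ 2
        + (γ i - (1 - κ)) * G (b i) ≤ κ * (N * P / 2 + 2 * ε) := by
      intro i _
      have ha : 0 ≤ ∑ a, (Dx (b i) (F a) (x, t)) ^ 2 := Finset.sum_nonneg fun a _ => by positivity
      have hg1 := (hγ i).1
      have hg2 := (hγ i).2
      have hw : 0 ≤ γ i - (1 - κ) := by linarith
      have k1 := mul_le_mul_of_nonneg_left (h1 (b i) (b.norm_eq_one i)) hw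
      have k2 : (γ i - (1 - κ)) * (N * P / 2 + 2 * ε) ≤ κ * (N * P / 2 + 2 * ε) := by
        gcongr; linarith
      have k3 : (κ - μ) * ∑ a, (Dx (b i) (F a) (x, t)) ^ 2
          ≤ (γ i - (1 - κ)) * ∑ a, (Dx (b i) (F a) (x, t)) ^ 2 :=
        mul_le_mul_of_nonneg_right (by linarith) ha
      linarith
    have := Finset.sum_le_sum this
    simp only [Finset.sum_add_distrib, ← Finset.mul_sum] at this
    simp at this
    have e : (n : ℝ) * (κ * (N * P / 2 + 2 * ε)) = 1 / 3 * (N * P / 2 + 2 * ε) := by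
      linear_combination (1 / 3) * (N * P / 2 + 2 * ε) * hκ
    linarith
  have S2 : 2 * (κ - μ) * ∑ i, ∑ a, (Dx (b' i) (F a) (y, t)) ^ 2
      - ∑ i, (γ' i - (1 - κ)) * H (b' i) ≤ 1 / 3 * (N * P / 2 + 2 * ε) := by
    have : ∀ i ∈ Finset.univ, 2 * (κ - μ) * ∑ a, (Dx (b' i) (F a) (y, t)) ^ 2
        - (γ' i - (1 - κ)) * H (b' i) ≤ κ * (N * P / 2 + 2 * ε) := by
      intro i _
      have ha : 0 ≤ ∑ a, (Dx (b' i) (F a) (y, t)) ^ 2 := Finset.sum_nonneg fun a _ => by positivity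
      have hg1 := (hγ' i).1
      have hg2 := (hγ' i).2
      have hw : 0 ≤ γ' i - (1 - κ) := by linarith
      have k1 := mul_le_mul_of_nonneg_left (h2 (b' i) (b'.norm_eq_one i)) hw
      have k2 : (γ' i - (1 - κ)) * (N * P / 2 + 2 * ε) ≤ κ * (N * P / 2 + 2 * ε) := by
        gcongr; linarith
      have k3 : (κ - μ) * ∑ a, (Dx (b' i) (F a) (y, t)) ^ 2
          ≤ (γ' i - (1 - κ)) * ∑ a, (Dx (b' i) (F a) (y, t)) ^ 2 :=
        mul_le_mul_of_nonneg_right (by linarith) ha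
      linarith
    have := Finset.sum_le_sum this
    simp only [Finset.sum_sub_distrib, ← Finset.mul_sum] at this
    simp at this
    have e : (n : ℝ) * (κ * (N * P / 2 + 2 * ε)) = 1 / 3 * (N * P / 2 + 2 * ε) := by
      linear_combination (1 / 3) * (N * P / 2 + 2 * ε) * hκ
    linarith
  have hfin : ∑ a, 2 * (F a (x, t) - F a (y, t)) * (∑ i, γ i * Dx (b i) (Dx (b i) (F a)) (x, t)
      - ∑ i, γ' i * Dx (b' i) (Dx (b' i) (F a)) (y, t))
      = ∑ i, γ i * G (b i) - ∑ i, γ' i * H (b' i) := by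
    simp only [hG, hH, Finset.mul_sum, mul_sub, Finset.sum_sub_distrib]
    rw [Finset.sum_comm, Finset.sum_comm (γ := ι) (s := Finset.univ (α := ι))]
    congr 1 <;>
    exact Finset.sum_congr rfl fun i _ => Finset.sum_congr rfl fun a _ => by ring
  rw [hfin]
  simp only [sub_mul, Finset.sum_sub_distrib, ← Finset.mul_sum] at S1 S2
  have hθ := mul_le_mul_of_nonneg_left S3 (show 0 ≤ 1 - κ by linarith)
  have hNP : 0 ≤ N * P := by positivity
  have e3 : 1 / 3 * (N * P) ≥ κ * (N * P) := by gcongr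
  have e4 : (1 - κ) * (4 * n * ε) ≤ 4 * n * ε := by
    have : 0 ≤ 4 * n * ε := by positivity
    nlinarith
  have e5 : ε ≤ n * ε := by nlinarith
  linarith

/-- Hessian entries in a fixed orthonormal frame. -/
def FF (f : XT n → ℝ) (o : OrthonormalBasis (Fin n) ℝ (EuclideanSpace ℝ (Fin n)))
    (a : Fin n × Fin n) : XT n → ℝ := Dx (o a.1) (Dx (o a.2) f)

lemma FF_sm {f : XT n → ℝ} (hf : Sm f)
    (o : OrthonormalBasis (Fin n) ℝ (EuclideanSpace ℝ (Fin n))) (a : Fin n × Fin n) :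
    Sm (FF f o a) := (hf.DD _).DD _

/-- The difference of two Hessians as a bilinear form. -/
lemma diff_form {f : XT n → ℝ} (hf : Sm f) {M : ℝ}
    (h0 : ∀ q ∈ Om n, ∀ v, 0 ≤ Dx v (Dx v f) q)
    (hM : ∀ q ∈ Om n, ∀ v, ‖v‖ = 1 → Dx v (Dx v f) q ≤ M) {p q : XT n} (hp : p ∈ Om n)
    (hq : q ∈ Om n) :
    ∃ V : EuclideanSpace ℝ (Fin n) →ₗ[ℝ] EuclideanSpace ℝ (Fin n) →ₗ[ℝ] ℝ,
      (∀ v w, V v w = Dx v (Dx w f) p - Dx v (Dx w f) q) ∧ (∀ v w, V v w = V w v) ∧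
      (∀ v, ‖v‖ = 1 → V v v ≤ M) := by
  obtain ⟨B, hB⟩ := Dx_bil hf hp
  obtain ⟨B', hB'⟩ := Dx_bil hf hq
  refine ⟨B - B', fun v w => ?_, fun v w => ?_, fun v hv => ?_⟩
  · simp [hB, hB']
  · simp only [LinearMap.sub_apply, hB, hB']
    rw [show Dx v (Dx w f) p = Dx w (Dx v f) p from DD_comm hf hp _ _,
      show Dx v (Dx w f) q = Dx w (Dx v f) q from DD_comm hf hq _ _]
  · simp only [LinearMap.sub_apply, hB, hB']
    linarith [h0 q hq v, hM p hp v hv]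

lemma Q_bound {f : XT n → ℝ} (hf : Sm f) {M : ℝ} (hM0 : 0 ≤ M)
    (h0 : ∀ q ∈ Om n, ∀ v, 0 ≤ Dx v (Dx v f) q)
    (hM : ∀ q ∈ Om n, ∀ v, ‖v‖ = 1 → Dx v (Dx v f) q ≤ M) 
    (o : OrthonormalBasis (Fin n) ℝ (EuclideanSpace ℝ (Fin n))) {p q : XT n} (hp : p ∈ Om n)
    (hq : q ∈ Om n) : ∑ a, (FF f o a p - FF f o a q) ^ 2 ≤ 2 * n * M ^ 2 := by
  have one : ∀ p ∈ Om n, ∀ q ∈ Om n, ∑ a : Fin n × Fin n,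
      (FF f o a p - FF f o a q) * FF f o a p ≤ n * M ^ 2 := by
    intro p hp q hq
    obtain ⟨V, hV, hVs, hVM⟩ := diff_form hf h0 hM hp hq
    obtain ⟨B, hB⟩ := Dx_bil hf hp
    have h1 := pair_le o V B hVs hVM (fun v => by rw [hB]; exact h0 p hp v)
    rw [Fintype.sum_prod_type]
    simp only [hV, hB] at h1
    refine h1.trans ?_
    calc M * ∑ k, Dx (o k) (Dx (o k) f) p ≤ M * ∑ k : Fin n, M := by
          gcongr with k
          exact hM p hp _ (o.norm_eq_one k)
      _ = n * M ^ 2 := by simp; ring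
  have e : ∑ a, (FF f o a p - FF f o a q) ^ 2 = ∑ a, (FF f o a p - FF f o a q) * FF f o a p
      + ∑ a, (FF f o a q - FF f o a p) * FF f o a q := by
    rw [← Finset.sum_add_distrib]
    exact Finset.sum_congr rfl fun a _ => by ring
  rw [e]
  linarith [one p hp q hq, one q hq p hp]

/-- one half of the reaction term -/
lemma reaction {f : XT n → ℝ} (hf : Sm f) {M : ℝ} (hM0 : 0 ≤ M)
    (h0 : ∀ q ∈ Om n, ∀ v, 0 ≤ Dx v (Dx v f) q)
    (hM : ∀ q ∈ Om n, ∀ v, ‖v‖ = 1 → Dx v (Dx v f) q ≤ M) 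
    (o : OrthonormalBasis (Fin n) ℝ (EuclideanSpace ℝ (Fin n))) {p q : XT n} (hp : p ∈ Om n)
    (hq : q ∈ Om n) {b : OrthonormalBasis (Fin n) ℝ (EuclideanSpace ℝ (Fin n))} {γ : Fin n → ℝ}
    (hI : Intf f M p b γ) :
    ∑ a, 2 * (FF f o a p - FF f o a q) * (Dt (FF f o a) p
      - ∑ i, γ i * Dx (b i) (Dx (b i) (FF f o a)) p)
      ≤ 8 * M ^ 2 * ∑ i, ∑ a, (Dx (b i) (FF f o a) p) ^ 2 := by
  obtain ⟨-, B, hB, hBn, hBl⟩ := Intf_conseq hf hp hI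
  obtain ⟨V, hV, hVs, hVM⟩ := diff_form hf h0 hM hq hp
  have h1 := pair_le o V (-B) hVs hVM (fun v => by
    simp only [LinearMap.neg_apply]; linarith [hBn v])
  have e1 : ∑ a, 2 * (FF f o a p - FF f o a q) * (Dt (FF f o a) p
      - ∑ i, γ i * Dx (b i) (Dx (b i) (FF f o a)) p)
      = 2 * ∑ k, ∑ l, V (o k) (o l) * (-B) (o k) (o l) := by
    rw [Fintype.sum_prod_type]
    simp only [Finset.mul_sum]
    refine Finset.sum_congr rfl fun k _ => Finset.sum_congr rfl fun l _ => ?_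
    simp only [LinearMap.neg_apply, hB, hV, FF]
    ring
  rw [e1]
  have h2 : ∑ k, (-B) (o k) (o k) ≤ 4 * M * ∑ i, ∑ a, (Dx (b i) (FF f o a) p) ^ 2 := by
    have : ∀ k ∈ Finset.univ, (-B) (o k) (o k) ≤ 4 * M *
        ∑ i, ∑ j, (Dx (o k) (Dx (b i) (Dx (b j) f)) p) ^ 2 := by
      intro k _
      simp only [LinearMap.neg_apply]
      linarith [hBl (o k)]
    have := Finset.sum_le_sum this
    rw [← Finset.mul_sum, third_sq hf hp] at this
    simp only [Fintype.sum_prod_type]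
    exact this
  have h3 := mul_le_mul_of_nonneg_left h2 hM0
  linarith

lemma doub_point {f : XT n → ℝ} (hf : Sm f) (hn : 1 ≤ n) {M : ℝ} (hM0 : 0 ≤ M)
    (hMn : 15 * (n : ℝ) * M ^ 2 ≤ 1)
    (h0 : ∀ q ∈ Om n, ∀ v, 0 ≤ Dx v (Dx v f) q)
    (hM : ∀ q ∈ Om n, ∀ v, ‖v‖ = 1 → Dx v (Dx v f) q ≤ M)
    (hI : ∀ p ∈ Om n, ∃ b γ, Intf f M p b γ)
    (o : OrthonormalBasis (Fin n) ℝ (EuclideanSpace ℝ (Fin n)))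
    {x y : EuclideanSpace ℝ (Fin n)} (hxy : x ≠ y) {t : ℝ} (ht : t < 0)
    {N ε s : ℝ} (hN : 0 ≤ N) (hε : 0 ≤ ε)
    (hmax : ∀ x' y', ∑ a, (FF f o a (x', t) - FF f o a (y', t)) ^ 2
      - N * (‖x' - y'‖ ^ 2) ^ (1 / 4 : ℝ)
      - ε * (‖x'‖ ^ 2 + ‖y'‖ ^ 2) ≤ ∑ a, (FF f o a (x, t) - FF f o a (y, t)) ^ 2
      - N * (‖x - y‖ ^ 2) ^ (1 / 4 : ℝ) - ε * (‖x‖ ^ 2 + ‖y‖ ^ 2))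
    (hdt : 0 ≤ ∑ a, 2 * (FF f o a (x, t) - FF f o a (y, t)) *
      (Dt (FF f o a) (x, t) - Dt (FF f o a) (y, t)) + s) :
    N * (‖x - y‖ ^ 2) ^ (-(3 / 4) : ℝ) / 3 ≤ s + 6 * n * ε := by
  have hn' : (1 : ℝ) ≤ n := by exact_mod_cast hn
  have hx : (x, t) ∈ Om n := ht
  have hy : (y, t) ∈ Om n := ht
  obtain ⟨b, γ, hIx⟩ := hI (x, t) hx
  obtain ⟨b', γ', hIy⟩ := hI (y, t) hy
  set κ : ℝ := 1 / (3 * n) with hκ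
  have hκe : κ * (3 * n) = 1 := by rw [hκ]; field_simp
  have hκM : 5 * M ^ 2 ≤ κ := by
    rw [hκ, le_div_iff₀ (by positivity)]; linarith
  have hγ : ∀ {p b γ}, Intf f M p b γ → ∀ i, 1 - M ^ 2 ≤ γ i ∧ γ i ≤ 1 := by
    intro p b γ h i
    refine ⟨le_trans ?_ (h.1 i).1, (h.1 i).2⟩
    rw [le_div_iff₀ (by positivity)]
    nlinarith [sq_nonneg (M ^ 2)]
  have S := second_order (FF f o) (FF_sm hf o) hxy ht hn hN hε hκe
    (by nlinarith [sq_nonneg M]) b b' γ γ' (hγ hIx) (hγ hIy) hmax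
  have r1 := reaction hf hM0 h0 hM o hx hy hIx
  have r2 := reaction hf hM0 h0 hM o hy hx hIy
  set ax := ∑ i, ∑ a, (Dx (b i) (FF f o a) (x, t)) ^ 2 with hax
  set ay := ∑ i, ∑ a, (Dx (b' i) (FF f o a) (y, t)) ^ 2 with hay
  have hax0 : 0 ≤ ax := Finset.sum_nonneg fun i _ => Finset.sum_nonneg fun a _ => by positivity
  have hay0 : 0 ≤ ay := Finset.sum_nonneg fun i _ => Finset.sum_nonneg fun a _ => by positivity
  have e : ∑ a, 2 * (FF f o a (x, t) - FF f o a (y, t)) *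
      (Dt (FF f o a) (x, t) - Dt (FF f o a) (y, t)) =
      ∑ a, 2 * (FF f o a (x, t) - FF f o a (y, t)) * (Dt (FF f o a) (x, t)
        - ∑ i, γ i * Dx (b i) (Dx (b i) (FF f o a)) (x, t))
      + ∑ a, 2 * (FF f o a (y, t) - FF f o a (x, t)) * (Dt (FF f o a) (y, t)
        - ∑ i, γ' i * Dx (b' i) (Dx (b' i) (FF f o a)) (y, t))
      + ∑ a, 2 * (FF f o a (x, t) - FF f o a (y, t)) *
        (∑ i, γ i * Dx (b i) (Dx (b i) (FF f o a)) (x, t)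
        - ∑ i, γ' i * Dx (b' i) (Dx (b' i) (FF f o a)) (y, t)) := by
    rw [← Finset.sum_add_distrib, ← Finset.sum_add_distrib]
    exact Finset.sum_congr rfl fun a _ => by ring
  have hc : 0 ≤ (κ - 5 * M ^ 2) * (ax + ay) := mul_nonneg (by linarith) (by linarith)
  linarith

set_option maxHeartbeats 1000000 in
lemma doubling {f : XT n → ℝ} (hf : Sm f) (hn : 1 ≤ n) {M : ℝ} (hM0 : 0 ≤ M)
    (hMn : 15 * (n : ℝ) * M ^ 2 ≤ 1)
    (h0 : ∀ q ∈ Om n, ∀ v, 0 ≤ Dx v (Dx v f) q)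
    (hM : ∀ q ∈ Om n, ∀ v, ‖v‖ = 1 → Dx v (Dx v f) q ≤ M)
    (hI : ∀ p ∈ Om n, ∃ b γ, Intf f M p b γ)
    (o : OrthonormalBasis (Fin n) ℝ (EuclideanSpace ℝ (Fin n)))
    (x₀ y₀ : EuclideanSpace ℝ (Fin n)) {t₀ : ℝ} (ht₀ : t₀ < 0) :
    ∑ a, (FF f o a (x₀, t₀) - FF f o a (y₀, t₀)) ^ 2 ≤ 0 := by
  by_contra hcon
  push Not at hcon
  have hn' : (1 : ℝ) ≤ n := by exact_mod_cast hn
  set q := ∑ a, (FF f o a (x₀, t₀) - FF f o a (y₀, t₀)) ^ 2 with hq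
  set Q0 : ℝ := 2 * n * M ^ 2 with hQ0
  have hQb : ∀ x y t, t < 0 → ∑ a, (FF f o a (x, t) - FF f o a (y, t)) ^ 2 ≤ Q0 :=
    fun x y t ht => Q_bound hf hM0 h0 hM o (p := (x, t)) (q := (y, t)) ht ht
  have hQ0p : 0 < Q0 := lt_of_lt_of_le hcon (hQb x₀ y₀ t₀ ht₀)
  set r₀ : ℝ := (‖x₀ - y₀‖ ^ 2) ^ (1 / 4 : ℝ) with hr₀
  have hr₀0 : 0 ≤ r₀ := by positivity
  set N := q / (4 * (r₀ + 1)) with hN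
  have hN0 : 0 < N := by positivity
  set L := N ^ 4 / (3 * Q0 ^ 3) with hL
  have hL0 : 0 < L := by positivity
  set s := L / 3 with hs
  have hs0 : 0 < s := by positivity
  set E0 := ‖x₀‖ ^ 2 + ‖y₀‖ ^ 2 with hE0
  have hE00 : 0 ≤ E0 := by positivity
  set ε := min (q / (4 * (E0 + 1))) (L / (18 * n)) with hε
  have hε0 : 0 < ε := by rw [hε, lt_min_iff]; constructor <;> positivity
  set Ψ : EuclideanSpace ℝ (Fin n) × EuclideanSpace ℝ (Fin n) × ℝ → ℝ := fun p =>
    ∑ a, (FF f o a (p.1, p.2.2) - FF f o a (p.2.1, p.2.2)) ^ 2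
      - N * (‖p.1 - p.2.1‖ ^ 2) ^ (1 / 4 : ℝ)
      - ε * (‖p.1‖ ^ 2 + ‖p.2.1‖ ^ 2) + s * (p.2.2 - t₀) with hΨ
  have hpos : 0 < Ψ (x₀, y₀, t₀) := by
    have h1 : N * r₀ ≤ q / 4 := by
      rw [hN, div_mul_eq_mul_div, div_le_div_iff₀ (by positivity) (by positivity)]
      nlinarith
    have h2 : ε * E0 ≤ q / 4 := by
      have : ε * E0 ≤ q / (4 * (E0 + 1)) * E0 := by gcongr; exact min_le_left _ _
      refine this.trans ?_
      rw [div_mul_eq_mul_div, div_le_div_iff₀ (by positivity) (by positivity)]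
      nlinarith
    simp only [hΨ, sub_self, mul_zero, add_zero]
    rw [← hq, ← hr₀, ← hE0]
    linarith
  set S : Set (EuclideanSpace ℝ (Fin n) × EuclideanSpace ℝ (Fin n) × ℝ) := {p | p.2.2 ≤ t₀} with hS
  have hneg : ∀ p ∈ S, p.2.2 < 0 := fun p hp => lt_of_le_of_lt (show p.2.2 ≤ t₀ from hp) ht₀
  have hScl : IsClosed S := isClosed_le (by fun_prop) continuous_const
  have hcont : ContinuousOn Ψ S := by
    have c0 : ∀ a, ContinuousOn (fun p : EuclideanSpace ℝ (Fin n) × EuclideanSpace ℝ (Fin n) × ℝ =>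
        (FF f o a (p.1, p.2.2) - FF f o a (p.2.1, p.2.2)) ^ 2) S := by
      intro a
      have hc := (FF_sm hf o a : Sm _).continuousOn
      refine ContinuousOn.pow (ContinuousOn.sub ?_ ?_) 2
      · exact hc.comp (by fun_prop) (fun p hp => hneg p hp)
      · exact hc.comp (by fun_prop) (fun p hp => hneg p hp)
    have c1 := continuousOn_finsetSum Finset.univ (fun a _ => c0 a)
    have c2 : Continuous (fun p : EuclideanSpace ℝ (Fin n) × EuclideanSpace ℝ (Fin n) × ℝ =>
        N * (‖p.1 - p.2.1‖ ^ 2) ^ (1 / 4 : ℝ)) := by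
      refine continuous_const.mul (Continuous.rpow_const (by fun_prop) (fun p => Or.inr (by norm_num)))
    have c3 : Continuous (fun p : EuclideanSpace ℝ (Fin n) × EuclideanSpace ℝ (Fin n) × ℝ =>
        ε * (‖p.1‖ ^ 2 + ‖p.2.1‖ ^ 2)) := by fun_prop
    have c4 : Continuous (fun p : EuclideanSpace ℝ (Fin n) × EuclideanSpace ℝ (Fin n) × ℝ =>
        s * (p.2.2 - t₀)) := by fun_prop
    exact ((c1.sub c2.continuousOn).sub c3.continuousOn).add c4.continuousOn
  obtain ⟨p, hpS, hpmax⟩ := exists_max hScl hcont (p0 := (x₀, y₀, t₀)) (le_refl t₀)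
    (1 + Q0 / ε + Q0 / s - t₀) (by
      intro p hp hr
      refine le_trans ?_ hpos.le
      have hpt := hneg p hp
      have hpt2 : p.2.2 ≤ t₀ := hp
      have g1 : 0 ≤ Q0 / ε := by positivity
      have g2 : 0 ≤ Q0 / s := by positivity
      have e1 : ε * (Q0 / ε) = Q0 := by field_simp
      have e2 : s * (Q0 / s) = Q0 := by field_simp
      have hQ := hQb p.1 p.2.1 p.2.2 hpt
      have hNr : 0 ≤ N * (‖p.1 - p.2.1‖ ^ 2) ^ (1 / 4 : ℝ) := by positivity
      have hst : s * (p.2.2 - t₀) ≤ 0 := mul_nonpos_of_nonneg_of_nonpos hs0.le (by linarith)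
      have hx0 := mul_nonneg hε0.le (sq_nonneg ‖p.1‖)
      have hy0 := mul_nonneg hε0.le (sq_nonneg ‖p.2.1‖)
      simp only [hΨ]
      rw [Prod.norm_def, Prod.norm_def, lt_max_iff, lt_max_iff] at hr
      rcases hr with hr | hr | hr
      · have q1 : ‖p.1‖ ≤ ‖p.1‖ ^ 2 := by nlinarith
        have q2 : ε * (Q0 / ε) ≤ ε * ‖p.1‖ ^ 2 := by gcongr; linarith
        linarith
      · have q1 : ‖p.2.1‖ ≤ ‖p.2.1‖ ^ 2 := by nlinarith
        have q2 : ε * (Q0 / ε) ≤ ε * ‖p.2.1‖ ^ 2 := by gcongr; linarith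
        linarith
      · rw [Real.norm_of_nonpos hpt.le] at hr
        have q2 : s * (Q0 / s) ≤ s * (t₀ - p.2.2) := by gcongr; linarith
        linarith)
  have hpp : 0 < Ψ p := lt_of_lt_of_le hpos (hpmax _ (le_refl t₀))
  obtain ⟨x, y, t⟩ := p
  have ht : t < 0 := hneg _ hpS
  have htt : t ≤ t₀ := hpS
  have hst : s * (t - t₀) ≤ 0 := mul_nonpos_of_nonneg_of_nonpos hs0.le (by linarith)
  have hEE : 0 ≤ ε * (‖x‖ ^ 2 + ‖y‖ ^ 2) := by positivity
  simp only [hΨ] at hpp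
  have hxy : x ≠ y := by
    rintro rfl
    simp at hpp
    linarith
  have hmax : ∀ x' y', ∑ a, (FF f o a (x', t) - FF f o a (y', t)) ^ 2
      - N * (‖x' - y'‖ ^ 2) ^ (1 / 4 : ℝ)
      - ε * (‖x'‖ ^ 2 + ‖y'‖ ^ 2) ≤ ∑ a, (FF f o a (x, t) - FF f o a (y, t)) ^ 2
      - N * (‖x - y‖ ^ 2) ^ (1 / 4 : ℝ) - ε * (‖x‖ ^ 2 + ‖y‖ ^ 2) := by
    intro x' y'
    have := hpmax (x', y', t) htt
    simp only [hΨ] at this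
    linarith
  have hdt : 0 ≤ ∑ a, 2 * (FF f o a (x, t) - FF f o a (y, t)) *
      (Dt (FF f o a) (x, t) - Dt (FF f o a) (y, t)) + s := by
    have d1 : HasDerivAt (fun r : ℝ => Ψ (x, y, r)) (∑ a, 2 * (FF f o a (x, t) - FF f o a (y, t)) *
      (Dt (FF f o a) (x, t) - Dt (FF f o a) (y, t)) + s) t := by
      have k1 : HasDerivAt (fun r : ℝ => ∑ a, (FF f o a (x, r) - FF f o a (y, r)) ^ 2)
          (∑ a, 2 * (FF f o a (x, t) - FF f o a (y, t)) *
          (Dt (FF f o a) (x, t) - Dt (FF f o a) (y, t))) t := by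
        refine HasDerivAt.fun_sum fun a _ => ?_
        have := ((time_deriv (FF_sm hf o a) x ht).fun_sub
          (time_deriv (FF_sm hf o a) y ht)).fun_pow 2
        exact this.congr_deriv (by push_cast; ring)
      have k2 := ((hasDerivAt_id t).sub_const t₀).const_mul s
      have k3 := ((k1.sub_const (N * (‖x - y‖ ^ 2) ^ (1 / 4 : ℝ))).sub_const
        (ε * (‖x‖ ^ 2 + ‖y‖ ^ 2))).fun_add k2
      exact k3.congr_deriv (by ring)
    exact left_nonneg d1 (fun r hr => hpmax (x, y, r) (le_trans hr htt))
  have key := doub_point hf hn hM0 hMn h0 hM hI o hxy ht hN0.le hε0.le hmax hdt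
  have hρ : 0 < ‖x - y‖ ^ 2 := by have := norm_pos_iff.2 (sub_ne_zero.2 hxy); positivity
  set r := (‖x - y‖ ^ 2) ^ (1 / 4 : ℝ) with hr
  have hr0 : 0 < r := Real.rpow_pos_of_pos hρ _
  have hPr : (‖x - y‖ ^ 2) ^ (-(3 / 4) : ℝ) * r ^ 3 = 1 := by
    rw [hr, ← Real.rpow_natCast (_ ^ (1 / 4 : ℝ)) 3, ← Real.rpow_mul hρ.le, ← Real.rpow_add hρ]
    norm_num
  set P := (‖x - y‖ ^ 2) ^ (-(3 / 4) : ℝ) with hP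
  have hNr : N * r ≤ Q0 := by
    have := hQb x y t ht
    linarith
  have hε6 : 6 * n * ε ≤ L / 3 := by
    have : ε ≤ L / (18 * n) := min_le_right _ _
    calc 6 * n * ε ≤ 6 * n * (L / (18 * n)) := by gcongr
      _ = L / 3 := by field_simp; ring
  have h3 : N * P / 3 ≤ 2 * L / 3 := by linarith
  have h4 : N ≤ 2 * L * r ^ 3 := by
    have := mul_le_mul_of_nonneg_right h3 (show 0 ≤ 3 * r ^ 3 by positivity)
    have e : N * P / 3 * (3 * r ^ 3) = N := by linear_combination N * hPr
    rw [e] at this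
    linarith
  have h5 : (N * r) ^ 3 ≤ Q0 ^ 3 := by gcongr
  have h6 : L * (3 * Q0 ^ 3) = N ^ 4 := by rw [hL]; field_simp
  have h7 : N ^ 4 ≤ 2 * L * (N * r) ^ 3 := by
    have := mul_le_mul_of_nonneg_left h4 (show 0 ≤ N ^ 3 by positivity)
    nlinarith
  have h8 : 2 * L * (N * r) ^ 3 ≤ 2 * L * Q0 ^ 3 := by gcongr
  have h9 : 0 < L * Q0 ^ 3 := by positivity
  linarith

lemma neg_const {φ : ℝ → ℝ} (h : ∀ t < 0, HasDerivAt φ 0 t) {s t : ℝ} (hs : s < 0) (ht : t < 0) :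
    φ s = φ t := by
  refine isOpen_Iio.is_const_of_deriv_eq_zero (s := Iio (0 : ℝ)) isPreconnected_Iio
    (fun r hr => (h r hr).differentiableAt.differentiableWithinAt)
    (fun r hr => (h r hr).deriv) hs ht

lemma Dx_zero_of_const {g : XT n → ℝ} (hg : Sm g)
    (h : ∀ x y t, t < 0 → g (x, t) = g (y, t)) (v : EuclideanSpace ℝ (Fin n)) :
    EqOn (Dx v g) (fun _ => 0) (Om n) := by
  rintro ⟨x, t⟩ ht
  have h1 := line_deriv hg x v ht 0
  have h2 : (fun s : ℝ => g (x + s • v, t)) = fun _ => g (x, t) := by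
    funext s
    exact h _ _ _ ht
  rw [h2] at h1
  have := h1.unique (hasDerivAt_const 0 _)
  simpa using this

lemma conclusion {f : XT n → ℝ} (hf : Sm f) (hn : 1 ≤ n) {M : ℝ} (hM0 : 0 ≤ M)
    (hMn : 15 * (n : ℝ) * M ^ 2 ≤ 1)
    (h0 : ∀ q ∈ Om n, ∀ v, 0 ≤ Dx v (Dx v f) q)
    (hM : ∀ q ∈ Om n, ∀ v, ‖v‖ = 1 → Dx v (Dx v f) q ≤ M)
    (hI : ∀ p ∈ Om n, ∃ b γ, Intf f M p b γ) :
    ∃ (A : Matrix (Fin n) (Fin n) ℝ) (bvec : Fin n → ℝ) (c₀ d : ℝ), A.IsSymm ∧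
      ∀ x : EuclideanSpace ℝ (Fin n), ∀ t < (0 : ℝ),
        f (x, t) = (1 / 2) * (∑ i, ∑ j, A i j * x i * x j)
          + (∑ i, bvec i * x i) + c₀ + d * t := by
  -- spatial constancy of the Hessian
  have hsp : ∀ o : OrthonormalBasis (Fin n) ℝ (EuclideanSpace ℝ (Fin n)), ∀ a x y t, t < 0 →
      FF f o a (x, t) = FF f o a (y, t) := by
    intro o a x y t ht
    have h1 := doubling hf hn hM0 hMn h0 hM hI o x y ht
    have h2 := Finset.single_le_sum (f := fun a => (FF f o a (x, t) - FF f o a (y, t)) ^ 2)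
      (fun a _ => sq_nonneg _) (Finset.mem_univ a)
    have h3 : (FF f o a (x, t) - FF f o a (y, t)) ^ 2 = 0 :=
      le_antisymm (h2.trans h1) (sq_nonneg _)
    have := pow_eq_zero_iff (two_ne_zero) |>.1 h3
    linarith
  have hle : ∀ p ∈ Om n, ∀ q ∈ Om n,
      (∀ o : OrthonormalBasis (Fin n) ℝ (EuclideanSpace ℝ (Fin n)), ∀ a, FF f o a p = FF f o a q) →
      Dt f q ≤ Dt f p := by
    intro p hp q hq h
    obtain ⟨b, γ, hb⟩ := hI p hp
    have h1 := (hb.2 q hq).1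
    have h2 : ∀ i, Dx (b i) (Dx (b i) f) q - Dx (b i) (Dx (b i) f) p = 0 := by
      intro i
      have := h b (i, i)
      simp only [FF] at this
      linarith
    simp only [h2, mul_zero, Finset.sum_const_zero] at h1
    linarith
  have hDtx : ∀ x y t, t < 0 → Dt f (x, t) = Dt f (y, t) := by
    intro x y t ht
    exact le_antisymm (hle (y, t) ht (x, t) ht fun o a => hsp o a _ _ t ht)
      (hle (x, t) ht (y, t) ht fun o a => hsp o a _ _ t ht)
  have hDxDt : ∀ v, EqOn (Dx v (Dt f)) (fun _ => 0) (Om n) :=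
    fun v => Dx_zero_of_const (hf.DD _) hDtx v
  have hzero : ∀ w : XT n, EqOn (DD w (fun _ : XT n => (0 : ℝ))) (fun _ => 0) (Om n) := by
    intro w p _
    simp [DD]
  have hFFt : ∀ (o : OrthonormalBasis (Fin n) ℝ (EuclideanSpace ℝ (Fin n))) a, ∀ p ∈ Om n,
      Dt (FF f o a) p = 0 := by
    intro o a p hp
    rw [show Dt (FF f o a) p = Dx (o a.1) (Dx (o a.2) (Dt f)) p from DD_move hf _ _ _ hp]
    rw [show Dx (o a.1) (Dx (o a.2) (Dt f)) p = Dx (o a.1) (fun _ => 0) p from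
      DD_congr (hDxDt (o a.2)) _ hp]
    exact hzero _ hp
  have hFF : ∀ (o : OrthonormalBasis (Fin n) ℝ (EuclideanSpace ℝ (Fin n))) a, ∀ p ∈ Om n,
      ∀ q ∈ Om n, FF f o a p = FF f o a q := by
    rintro o a ⟨x, t⟩ ht ⟨y, r⟩ hr
    rw [hsp o a x y t ht]
    refine neg_const (φ := fun t => FF f o a (y, t)) (fun s hs => ?_) ht hr
    have := time_deriv (FF_sm hf o a) y hs
    rwa [hFFt o a (y, s) hs] at this
  have hDt : ∀ p ∈ Om n, ∀ q ∈ Om n, Dt f p = Dt f q := fun p hp q hq =>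
    le_antisymm (hle q hq p hp fun o a => hFF o a q hq p hp)
      (hle p hp q hq fun o a => hFF o a p hp q hq)
  set o := EuclideanSpace.basisFun (Fin n) ℝ with ho
  have hm : ((0, -1) : XT n) ∈ Om n := by simp [Om]
  set p₁ : XT n := (0, -1) with hp₁
  have hgrad : ∀ v, ∀ t < 0, Dx v f (0, t) = Dx v f p₁ := by
    intro v t ht
    refine neg_const (φ := fun t => Dx v f (0, t)) (fun s hs => ?_) ht (by norm_num : (-1 : ℝ) < 0)
    have := time_deriv (hf.DD (v, 0)) 0 hs
    rwa [show Dt (DD (v, 0) f) (0, s) = 0 from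
      (DD_comm hf (p := (0, s)) hs _ _).trans (hDxDt v (show ((0, s) : XT n) ∈ Om n from hs))] at this
  have hexp : ∀ z : EuclideanSpace ℝ (Fin n), z = ∑ i, z i • o i := by
    intro z
    ext j
    simp [ho, Pi.single_apply]
  refine ⟨Matrix.of fun k l => FF f o (k, l) p₁, fun k => Dx (o k) f p₁,
    f p₁ + Dt f p₁, Dt f p₁, ?_, ?_⟩
  · ext k l
    simp only [Matrix.transpose_apply, Matrix.of_apply, FF]
    exact DD_comm hf hm _ _
  intro x t ht
  have hlin : Dx x f p₁ = ∑ k, Dx (o k) f p₁ * x k := by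
    obtain ⟨l, hl⟩ := Dx_lin f p₁
    rw [← hl]
    conv_lhs => rw [hexp x]
    rw [map_sum]
    refine Finset.sum_congr rfl fun k _ => ?_
    rw [map_smul, hl, smul_eq_mul, mul_comm]
  have hquad : ∀ p ∈ Om n, Dx x (Dx x f) p = ∑ i, ∑ j, FF f o (i, j) p₁ * x i * x j := by
    intro p hp
    obtain ⟨B, hB⟩ := Dx_bil hf hp
    rw [← hB]
    conv_lhs => rw [hexp x]
    simp only [map_sum, LinearMap.sum_apply, map_smul, LinearMap.smul_apply, smul_eq_mul,
      Finset.mul_sum]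
    rw [Finset.sum_comm]
    refine Finset.sum_congr rfl fun i _ => Finset.sum_congr rfl fun j _ => ?_
    rw [hB, show Dx (o i) (Dx (o j) f) p = FF f o (i, j) p from rfl, hFF o (i, j) p hp p₁ hm]
    ring
  set q := ∑ i, ∑ j, FF f o (i, j) p₁ * x i * x j with hq
  have hφ1 : ∀ s : ℝ, Dx x f (0 + s • x, t) - q * s = Dx x f p₁ := by
    intro s
    have hd : ∀ s : ℝ, HasDerivAt (fun s : ℝ => Dx x f (0 + s • x, t) - q * s) 0 s := by
      intro s
      have k1 := line_deriv (hf.DD (x, 0)) 0 x ht s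
      have k2 := (hasDerivAt_id s).const_mul q
      refine (k1.fun_sub k2).congr_deriv ?_
      rw [show Dx x (DD (x, 0) f) (0 + s • x, t) = q from hquad _ ht]
      ring
    have := is_const_of_deriv_eq_zero (fun s => (hd s).differentiableAt) (fun s => (hd s).deriv) s 0
    simp only [zero_smul, add_zero, mul_zero, sub_zero] at this
    rw [this, hgrad x t ht]
  have hφ : f (x, t) = f (0, t) + Dx x f p₁ + q / 2 := by
    have hd : ∀ s : ℝ, HasDerivAt (fun s : ℝ => f (0 + s • x, t) - Dx x f p₁ * s - q / 2 * s ^ 2)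
        0 s := by
      intro s
      have k1 := line_deriv hf 0 x ht s
      have k2 := (hasDerivAt_id s).const_mul (Dx x f p₁)
      have k3 := ((hasDerivAt_id s).fun_pow 2).const_mul (q / 2)
      refine ((k1.fun_sub k2).fun_sub k3).congr_deriv ?_
      have := hφ1 s
      rw [zero_add] at this
      simp
      linarith
    have := is_const_of_deriv_eq_zero (fun s => (hd s).differentiableAt) (fun s => (hd s).deriv) 1 0
    simp at this
    linarith
  have hφt : f (0, t) = f p₁ + Dt f p₁ + Dt f p₁ * t := by
    have hd : ∀ s < 0, HasDerivAt (fun s : ℝ => f (0, s) - Dt f p₁ * s) 0 s := by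
      intro s hs
      have k1 := time_deriv hf 0 hs
      have k2 := (hasDerivAt_id s).const_mul (Dt f p₁)
      refine (k1.fun_sub k2).congr_deriv ?_
      rw [hDt (0, s) hs p₁ hm]
      ring
    have := neg_const hd ht (by norm_num : (-1 : ℝ) < 0)
    change f (0, t) - Dt f p₁ * t = f p₁ - Dt f p₁ * (-1) at this
    linarith
  rw [hφ, hφt, hlin]
  simp only [Matrix.of_apply]
  rw [← hq]
  ring

lemma main_aux {f : XT n → ℝ} (hn : 1 ≤ n) {Θ C R₀ c : ℝ}
    (hsm : ContDiffOn ℝ ∞ f (Set.univ ×ˢ Set.Iic (0 : ℝ)))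
    (hconv : ∀ t < (0 : ℝ), ConvexOn ℝ Set.univ (fun y => f (y, t)))
    (hsym : ∀ x : EuclideanSpace ℝ (Fin n), ∀ t < (0 : ℝ),
      (hess (fun y => f (y, t)) x).IsHermitian)
    (hPDE : ∀ x : EuclideanSpace ℝ (Fin n), ∀ t (ht : t < (0 : ℝ)),
      deriv (fun s => f (x, s)) t = (∑ i, Real.arctan ((hsym x t ht).eigenvalues i)) - Θ)
    (hhess : ∀ x : EuclideanSpace ℝ (Fin n), ∀ t < (0 : ℝ),
      (C • (1 : Matrix (Fin n) (Fin n) ℝ) - hess (fun y => f (y, t)) x).PosSemidef)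
    (hR₀ : 0 ≤ R₀) (hc : c < 1 / (6 * Real.sqrt n + 2) ^ 2)
    (hgrowth : ∃ T ≤ (0 : ℝ), ∀ t ≤ T, ∀ x : EuclideanSpace ℝ (Fin n),
      |f (x, t)| ≤ c * (‖x‖ ^ 2 + R₀)) :
    ∃ (A : Matrix (Fin n) (Fin n) ℝ) (bvec : Fin n → ℝ) (c₀ d : ℝ),
      A.IsSymm ∧
      ∀ x : EuclideanSpace ℝ (Fin n), ∀ t ≤ (0 : ℝ),
        f (x, t) = (1 / 2) * (∑ i, ∑ j, A i j * x i * x j)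
          + (∑ i, bvec i * x i) + c₀ + d * t := by
  have hf : Sm f := hsm.mono (fun p (hp : p.2 < 0) => ⟨mem_univ _, hp.le⟩)
  have hPDE2 : ∀ x : EuclideanSpace ℝ (Fin n), ∀ t (ht : t < (0 : ℝ)),
      Dt f (x, t) = (∑ i, Real.arctan ((hsym x t ht).eigenvalues i)) - Θ := by
    intro x t ht
    rw [← hPDE x t ht, (time_deriv hf x ht).deriv]
  have h0 := hess_nonneg hf hconv
  have hC : ∀ q ∈ Om n, ∀ v, ‖v‖ = 1 → Dx v (Dx v f) q ≤ C := by
    rintro ⟨x, t⟩ ht v hv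
    have ht : t < 0 := ht
    have hq : Dx v (Dx v f) (x, t) =
        inner ℝ v (Matrix.toEuclideanLin (hess (fun y => f (y, t)) x) v) := by
      obtain ⟨B, hB⟩ := Dx_bil hf (p := (x, t)) ht
      rw [← hB, bil_matrix]
      congr 3
      ext i j
      rw [hess_eq hf ht, Matrix.of_apply, hB]
    have h1 := (hhess x t ht).dotProduct_mulVec_nonneg v.ofLp
    have h2 : star v.ofLp ⬝ᵥ v.ofLp = 1 := by
      have : inner ℝ v v = (1 : ℝ) := by rw [real_inner_self_eq_norm_sq, hv]; norm_num
      rw [EuclideanSpace.inner_eq_star_dotProduct] at this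
      rwa [dotProduct_comm] at this
    rw [Matrix.sub_mulVec, dotProduct_sub, Matrix.smul_mulVec, Matrix.one_mulVec,
      dotProduct_smul, h2, smul_eq_mul, mul_one] at h1
    rw [hq, EuclideanSpace.inner_eq_star_dotProduct, dotProduct_comm]
    have : (Matrix.toEuclideanLin (hess (fun y => f (y, t)) x) v).ofLp =
      Matrix.mulVec (hess (fun y => f (y, t)) x) v.ofLp := rfl
    rw [this]
    linarith
  have hI : ∀ M, (∀ q ∈ Om n, ∀ v, ‖v‖ = 1 → Dx v (Dx v f) q ≤ M) →
      ∀ p ∈ Om n, ∃ b γ, Intf f M p b γ :=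
    fun M hM p hp => interface hf h0 hM hsym hPDE2 p hp
  -- time derivative bound
  set K0 : ℝ := n * (Real.pi / 2) + |Θ| with hK0
  have hK0n : 0 ≤ K0 := by positivity
  have hDt : ∀ x, ∀ t < 0, |Dt f (x, t)| ≤ K0 := by
    intro x t ht
    rw [hPDE2 x t ht]
    rw [hK0]
    refine (abs_sub _ _).trans (add_le_add ?_ le_rfl)
    refine (Finset.abs_sum_le_sum_abs _ _).trans ?_
    refine (Finset.sum_le_card_nsmul _ _ (Real.pi / 2) fun i _ => ?_).trans (by simp)
    rw [abs_le]
    exact ⟨(Real.neg_pi_div_two_lt_arctan _).le, (Real.arctan_lt_pi_div_two _).le⟩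
  have hs0 := Real.sqrt_nonneg (n : ℝ)
  have hsq := Real.sq_sqrt (Nat.cast_nonneg n : (0 : ℝ) ≤ n)
  set k : ℝ := 1 / (6 * Real.sqrt n + 2) ^ 2 with hk
  have hkpos : 0 < k := by positivity
  have hk2 : k * (36 * n) ≤ 1 := by
    rw [hk, one_div, inv_mul_le_iff₀ (by positivity)]
    nlinarith
  obtain ⟨T, hT, hg⟩ := hgrowth
  set T' := min T (-1) with hT'
  have hT'0 : T' < 0 := (min_le_right _ _).trans_lt (by norm_num)
  set R : ℝ := R₀ + K0 * |T'| / k with hR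
  have hRn : R₀ ≤ R := by
    have : 0 ≤ K0 * |T'| / k := by positivity
    linarith
  have hkR : k * R = k * R₀ + K0 * |T'| := by
    rw [hR]; field_simp
  have hgrow : ∀ q ∈ Om n, |f q| ≤ k * (‖q.1‖ ^ 2 + R) := by
    rintro ⟨x, t⟩ ht
    have ht : t < 0 := ht
    simp only
    rcases le_total t T' with h | h
    · refine (hg t (h.trans (min_le_left _ _)) x).trans ?_
      have : 0 ≤ ‖x‖ ^ 2 + R₀ := by positivity
      have := mul_le_mul_of_nonneg_right hc.le this
      nlinarith
    · have h1 : |f (x, T')| ≤ k * (‖x‖ ^ 2 + R₀) := by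
        refine (hg T' (min_le_left _ _) x).trans ?_
        have : 0 ≤ ‖x‖ ^ 2 + R₀ := by positivity
        exact mul_le_mul_of_nonneg_right hc.le this
      have h2 : ‖f (x, t) - f (x, T')‖ ≤ K0 * ‖t - T'‖ :=
        (convex_Iio (0 : ℝ)).norm_image_sub_le_of_norm_hasDerivWithin_le
          (f := fun s => f (x, s)) (f' := fun s => Dt f (x, s))
          (fun s hs => (time_deriv hf x hs).hasDerivWithinAt) (fun s hs => hDt x s hs) hT'0 ht
      rw [Real.norm_eq_abs, Real.norm_eq_abs, abs_of_nonneg (sub_nonneg.2 h)] at h2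
      have h3 : t - T' ≤ |T'| := by rw [abs_of_neg hT'0]; linarith
      have h4 : K0 * (t - T') ≤ K0 * |T'| := mul_le_mul_of_nonneg_left h3 hK0n
      have h5 : |f (x, t)| ≤ |f (x, t) - f (x, T')| + |f (x, T')| := by
        have := abs_add_le (f (x, t) - f (x, T')) (f (x, T'))
        simpa using this
      linarith
  obtain ⟨M, hM0, hMn, hM⟩ := small_hess hf hn hkpos hk2 h0 hC hI
    (K := 4 * k ^ 2 * (2 + 2 * R) ^ 2) (by positivity)
    (fun q hq e he => grad_bound hf hconv hkpos (hR₀.trans hRn) hgrow q hq e he)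
  obtain ⟨A, b, c₀, d, hA, h⟩ := conclusion hf hn hM0 hMn h0 hM (hI M hM)
  refine ⟨A, b, c₀, d, hA, fun x t ht => ?_⟩
  rcases ht.lt_or_eq with ht | rfl
  · exact h x t ht
  have hcw : ContinuousWithinAt (fun s : ℝ => f (x, s)) (Iio 0) 0 := by
    have h1 := hsm.continuousOn (x, 0) ⟨mem_univ _, le_refl (0 : ℝ)⟩
    have h2 : ContinuousWithinAt (fun s : ℝ => ((x, s) : XT n)) (Iio 0) 0 := by fun_prop
    exact ContinuousWithinAt.comp (f := fun s : ℝ => ((x, s) : XT n)) (g := f) h1 h2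
      (fun s (hs : s < 0) => ⟨mem_univ _, hs.le⟩)
  set P := (1 / 2) * (∑ i, ∑ j, A i j * x i * x j) + (∑ i, b i * x i) + c₀ with hP
  have hc2 : Tendsto (fun s : ℝ => P + d * s) (𝓝[<] 0) (𝓝 (P + d * 0)) := by
    have : Continuous fun s : ℝ => P + d * s := by fun_prop
    exact this.continuousWithinAt
  refine tendsto_nhds_unique hcw.tendsto (hc2.congr' ?_)
  filter_upwards [self_mem_nhdsWithin] with s hs
  exact (h x s hs).symm

end LMCF

theorem stmt19 (n : ℕ) (hn : 1 ≤ n) (Θ₀ : ℝ)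
    (u : EuclideanSpace ℝ (Fin n) → ℝ → ℝ)
    (hsmooth : ContDiffOn ℝ (⊤ : ℕ∞) (fun p : EuclideanSpace ℝ (Fin n) × ℝ => u p.1 p.2)
      (Set.univ ×ˢ Set.Iic (0 : ℝ)))
    (hconv : ∀ t ≤ (0 : ℝ), ConvexOn ℝ Set.univ (fun y => u y t))
    (hsym : ∀ x : EuclideanSpace ℝ (Fin n), ∀ t ≤ (0 : ℝ),
      (hess (fun y => u y t) x).IsHermitian)
    (hPDE : ∀ x : EuclideanSpace ℝ (Fin n), ∀ t (ht : t ≤ (0 : ℝ)),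
      deriv (u x) t = (∑ i, Real.arctan ((hsym x t ht).eigenvalues i)) - Θ₀)
    (C : ℝ)
    (hhess : ∀ x : EuclideanSpace ℝ (Fin n), ∀ t ≤ (0 : ℝ),
      (C • (1 : Matrix (Fin n) (Fin n) ℝ) - hess (fun y => u y t) x).PosSemidef)
    (R₀ c : ℝ) (hR₀ : 0 ≤ R₀) (hc : c < 1 / (6 * Real.sqrt n + 2) ^ 2)
    (hgrowth : ∃ T ≤ (0 : ℝ), ∀ t ≤ T, ∀ x : EuclideanSpace ℝ (Fin n),
      |u x t| ≤ c * (‖x‖ ^ 2 + R₀)) :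
    ∃ (A : Matrix (Fin n) (Fin n) ℝ) (bvec : Fin n → ℝ) (c₀ d : ℝ),
      A.IsSymm ∧
      ∀ x : EuclideanSpace ℝ (Fin n), ∀ t ≤ (0 : ℝ),
        u x t = (1 / 2) * (∑ i, ∑ j, A i j * x i * x j)
          + (∑ i, bvec i * x i) + c₀ + d * t := by
  exact main_aux (f := fun p : EuclideanSpace ℝ (Fin n) × ℝ => u p.1 p.2) hn hsmooth
    (fun t ht => hconv t ht.le) (fun x t ht => hsym x t ht.le) (fun x t ht => hPDE x t ht.le)
    (fun x t ht => hhess x t ht.le) hR₀ hc hgrowth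
end
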